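/- arXiv:2202.03526 — 8 statements merged into one kernel-verified Lean document; each statement's English description precedes it below -/
import Mathlib

section
/- Let X and Y be full Λ-lattices in A. Then C := { λ ∈ A : Xλ ⊆ Y } is a full O_r(X)-lattice in A. Moreover, X and Y are isomorphic as Λ-modules if and only if (a) there exists α ∈ A^× such that C = O_r(X)·α, and (b) Y = XC. Furthermore, when this is the case, Y = Xα. -/
/-! A `Λ`-linear map `X → A` commutes with scalars from `K`, because clearing denominators moves
`A` into `Λ` and `1` into `X`; hence it is right multiplication by an element `α` of `A`.  So
`X ≅ Y` means `Y = Xα` for a unit `α`, and for a unit `α` the equation `Y = Xα` can be read off the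
colon `C`: from `Y = Xα` one gets `C = O_r(X)α`, and conversely `XC = X O_r(X) α = Xα`. -/

open Submodule
open scoped nonZeroDivisors

section RightColon

variable {R A : Type*} [CommSemiring R] [Semiring A] [Algebra R A]

/-- The right colon `{c ∈ A | X c ⊆ Y}` of two `R`-submodules of an `R`-algebra `A`.  The arguments
are in the order of `Submodule.colon`: the target `Y` comes first. -/
def rightColon (Y X : Submodule R A) : Submodule R A where
  carrier := {c | ∀ x ∈ X, x * c ∈ Y}
  add_mem' ha hb x hx := by
    rw [mul_add]
    exact Y.add_mem (ha x hx) (hb x hx)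
  zero_mem' x _ := by
    rw [mul_zero]
    exact Y.zero_mem
  smul_mem' r c hc x hx := by
    rw [mul_smul_comm]
    exact Y.smul_mem r (hc x hx)

theorem mem_rightColon {X Y : Submodule R A} {c : A} :
    c ∈ rightColon Y X ↔ ∀ x ∈ X, x * c ∈ Y :=
  Iff.rfl

theorem mul_mem_rightColon {X Y Z : Submodule R A} {b c : A}
    (hb : b ∈ rightColon Y X) (hc : c ∈ rightColon Z Y) : b * c ∈ rightColon Z X := fun x hx ↦ by
  rw [← mul_assoc]
  exact hc _ (hb x hx)

/-- The right order `O_r(X) = {μ ∈ A | X μ ⊆ X}` of an `R`-submodule `X` of an `R`-algebra `A`. -/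
def rightOrder (X : Submodule R A) : Subalgebra R A where
  carrier := rightColon X X
  mul_mem' := mul_mem_rightColon
  add_mem' := add_mem
  algebraMap_mem' r x hx := by
    rw [← Algebra.commutes, ← Algebra.smul_def]
    exact X.smul_mem r hx

theorem mul_toSubmodule_rightOrder (X : Submodule R A) :
    X * Subalgebra.toSubmodule (rightOrder X) = X := by
  refine le_antisymm (mul_le.2 fun x hx μ hμ ↦ hμ x hx) fun x hx ↦ ?_
  rw [← mul_one x]
  exact mul_mem_mul hx (one_mem (rightOrder X))

theorem coe_mul_span_singleton (X : Submodule R A) (a : A) :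
    ((X * span R {a} : Submodule R A) : Set A) = (fun x ↦ x * a) '' X :=
  Set.ext fun _ ↦ mem_mul_span_singleton

theorem mem_mul_span_singleton_units {X : Submodule R A} {α : Aˣ} {a : A} :
    a ∈ X * span R {(α : A)} ↔ a * ↑α⁻¹ ∈ X := by
  simp only [mem_mul_span_singleton, ← Units.eq_mul_inv_iff_mul_eq, exists_eq_right]

theorem rightColon_mul_span_singleton_units (Y X : Submodule R A) (α : Aˣ) :
    rightColon (Y * span R {(α : A)}) X = rightColon Y X * span R {(α : A)} := by
  ext c
  simp only [mem_rightColon, mem_mul_span_singleton_units, mul_assoc]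

theorem rightColon_eq_and_mul_rightColon_eq_iff {X Y : Submodule R A} {α : Aˣ} :
    rightColon Y X = Subalgebra.toSubmodule (rightOrder X) * span R {(α : A)} ∧
      X * rightColon Y X = Y ↔ Y = X * span R {(α : A)} := by
  have hX : X * (Subalgebra.toSubmodule (rightOrder X) * span R {(α : A)}) =
      X * span R {(α : A)} := by
    rw [← mul_assoc, mul_toSubmodule_rightOrder]
  constructor
  · rintro ⟨hC, hXC⟩
    rw [← hXC, hC, hX]
  · rintro rfl
    have hC : rightColon (X * span R {(α : A)}) X =
        Subalgebra.toSubmodule (rightOrder X) * span R {(α : A)} :=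
      rightColon_mul_span_singleton_units X X α
    exact ⟨hC, hC ▸ hX⟩

end RightColon

section ClearingDenominators

variable {R K V : Type*} [CommSemiring R] (S : Submonoid R) [CommSemiring K] [Algebra R K]
  [IsLocalization S K] [AddCommMonoid V] [Module R V] [Module K V] [IsScalarTower R K V]

include K in
theorem bijective_smul_of_isLocalization (s : S) : Function.Bijective fun v : V ↦ s • v := by
  simpa only [algebraMap_smul, Submonoid.smul_def] using
    (IsLocalization.map_units K s).smul_bijective (β := V)

theorem span_eq_top_iff_exists_smul_mem {N : Submodule R V} :
    span K (N : Set V) = ⊤ ↔ ∀ v, ∃ s : S, s • v ∈ N := by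
  refine ⟨fun hN v ↦ ?_, fun h ↦ eq_top_iff'.2 fun v ↦ ?_⟩
  · simpa only [span_eq] using
      multiple_mem_span_of_mem_localization_span S K (N : Set V) v (hN ▸ mem_top)
  · obtain ⟨s, hs⟩ := h v
    exact IsLocalization.smul_mem_iff.1 (subset_span hs)

theorem exists_smul_mem_of_fg {M N : Submodule R V} (hM : M.FG)
    (hN : span K (N : Set V) = ⊤) : ∃ s : S, ∀ m ∈ M, s • m ∈ N := by
  induction M, hM using fg_induction with
  | singleton v =>
    obtain ⟨s, hs⟩ := (span_eq_top_iff_exists_smul_mem S).1 hN v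
    refine ⟨s, fun m hm ↦ ?_⟩
    obtain ⟨r, rfl⟩ := mem_span_singleton.1 hm
    rw [smul_comm]
    exact N.smul_mem r hs
  | sup M₁ M₂ _ _ h₁ h₂ =>
    obtain ⟨s, hs⟩ := h₁
    obtain ⟨t, ht⟩ := h₂
    refine ⟨s * t, fun m hm ↦ ?_⟩
    obtain ⟨m₁, hm₁, m₂, hm₂, rfl⟩ := mem_sup.1 hm
    rw [smul_add, mul_smul, smul_comm, mul_smul]
    exact N.add_mem (N.smul_mem t (hs m₁ hm₁)) (N.smul_mem s (ht m₂ hm₂))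

end ClearingDenominators

section Lattice

variable {R K A : Type*} [CommRing R] (S : Submonoid R) [CommRing K] [Algebra R K]
  [IsLocalization S K] [Ring A] [Algebra K A] [Algebra R A] [IsScalarTower R K A]

include S

theorem fg_rightColon [IsNoetherianRing R] {X Y : Submodule R A} (hY : Y.FG)
    (hX : span K (X : Set A) = ⊤) : (rightColon Y X).FG := by
  obtain ⟨s, hs⟩ := (span_eq_top_iff_exists_smul_mem S).1 hX 1
  have hsC : (rightColon Y X).map (LinearMap.lsmul R A s) ≤ Y := by
    rintro _ ⟨c, hc, rfl⟩
    simpa only [Submonoid.smul_def, smul_one_mul, LinearMap.lsmul_apply] using hc _ hs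
  exact fg_of_fg_map_injective _ (bijective_smul_of_isLocalization (K := K) S s).injective
    (hY.of_le hsC)

theorem span_rightColon {X Y : Submodule R A} (hX : X.FG) (hY : span K (Y : Set A) = ⊤) :
    span K (rightColon Y X : Set A) = ⊤ := by
  refine (span_eq_top_iff_exists_smul_mem S).2 fun a ↦ ?_
  obtain ⟨s, hs⟩ := exists_smul_mem_of_fg S (hX.map (LinearMap.mulRight R a)) hY
  refine ⟨s, fun x hx ↦ ?_⟩
  rw [mul_smul_comm]
  exact hs _ (mem_map_of_mem hx)

theorem isLattice_rightColon [IsNoetherianRing R] {X Y : Submodule R A} (hX : IsLattice K X)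
    (hY : IsLattice K Y) : IsLattice K (rightColon Y X) where
  fg := fg_rightColon S hY.fg hX.span_eq_top
  span_eq_top := span_rightColon S hX.fg hY.span_eq_top

end Lattice

section RightMultiplication

theorem eq_of_forall_mul_eq_mul {K A : Type*} [CommSemiring K] [Semiring A] [Algebra K A]
    {X : Set A} (hX : span K X = ⊤) {a b : A} (h : ∀ x ∈ X, x * a = x * b) : a = b := by
  have hab : LinearMap.mulRight K a = LinearMap.mulRight K b := LinearMap.ext_on hX h
  simpa using LinearMap.congr_fun hab 1

variable {R K A : Type*} [CommSemiring R] (S : Submonoid R) [CommSemiring K] [Algebra R K]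
  [IsLocalization S K] [Semiring A] [Algebra K A] [Algebra R A] [IsScalarTower R K A]
  {Λ : Subalgebra R A} {X Y : Submodule Λ A}

include S

theorem exists_forall_apply_eq_mul (hΛ : span K (Λ : Set A) = ⊤) (hX : span K (X : Set A) = ⊤)
    (f : X →ₗ[Λ] A) : ∃ a : A, ∀ x : X, f x = x * a := by
  obtain ⟨s, hs⟩ := (span_eq_top_iff_exists_smul_mem S (N := X.restrictScalars R)).1 hX 1
  obtain ⟨a, ha : s • a = f ⟨s • 1, hs⟩⟩ :=
    (bijective_smul_of_isLocalization (K := K) S s).surjective (f ⟨s • 1, hs⟩)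
  refine ⟨a, fun x ↦ ?_⟩
  obtain ⟨t, ht⟩ := (span_eq_top_iff_exists_smul_mem S (N := Subalgebra.toSubmodule Λ)).1 hΛ x
  have hx : ((t * s : S) : R) • x = (⟨t • (x : A), ht⟩ : Λ) • (⟨s • 1, hs⟩ : X) :=
    Subtype.ext <| by
      simp [Submonoid.smul_def, Subalgebra.smul_def, mul_smul, smul_comm (s : R)]
  apply (bijective_smul_of_isLocalization (K := K) S (t * s)).injective
  calc (t * s) • f x = f (((t * s : S) : R) • x) := (f.map_smul_of_tower _ x).symm
    _ = t • (x : A) * (s • a) := by rw [hx, map_smul, ha]; rfl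
    _ = (t * s) • (x * a) := smul_mul_smul_comm ..

theorem exists_unit_of_linearEquiv (hΛ : span K (Λ : Set A) = ⊤) (hX : span K (X : Set A) = ⊤)
    (hY : span K (Y : Set A) = ⊤) (e : X ≃ₗ[Λ] Y) : ∃ α : Aˣ, ∀ x : X, (e x : A) = x * α := by
  obtain ⟨a, ha : ∀ x, (e x : A) = x * a⟩ :=
    exists_forall_apply_eq_mul S hΛ hX (Y.subtype ∘ₗ e.toLinearMap)
  obtain ⟨b, hb : ∀ y, (e.symm y : A) = y * b⟩ :=
    exists_forall_apply_eq_mul S hΛ hY (X.subtype ∘ₗ e.symm.toLinearMap)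
  have hab : a * b = 1 := eq_of_forall_mul_eq_mul hX fun x hx ↦ by
    rw [← mul_assoc, ← ha ⟨x, hx⟩, ← hb, e.symm_apply_apply, mul_one]
  have hba : b * a = 1 := eq_of_forall_mul_eq_mul hY fun y hy ↦ by
    rw [← mul_assoc, ← hb ⟨y, hy⟩, ← ha, e.apply_symm_apply, mul_one]
  exact ⟨⟨a, b, hab, hba⟩, ha⟩

theorem nonempty_linearEquiv_iff_exists_eq_mul_span_singleton (hΛ : span K (Λ : Set A) = ⊤)
    (hX : span K (X : Set A) = ⊤) (hY : span K (Y : Set A) = ⊤) :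
    Nonempty (X ≃ₗ[Λ] Y) ↔
      ∃ α : Aˣ, Y.restrictScalars R = X.restrictScalars R * span R {(α : A)} := by
  constructor
  · rintro ⟨e⟩
    obtain ⟨α, hα⟩ := exists_unit_of_linearEquiv S hΛ hX hY e
    refine ⟨α, ext fun y ↦ ?_⟩
    rw [restrictScalars_mem, mem_mul_span_singleton]
    constructor
    · intro hy
      exact ⟨e.symm ⟨y, hy⟩, (e.symm ⟨y, hy⟩).2, by rw [← hα, e.apply_symm_apply]⟩
    · rintro ⟨x, hx, rfl⟩
      simpa only [hα] using (e ⟨x, hx⟩).2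
  · rintro ⟨α, hα⟩
    have hmap : X.map (LinearMap.mulRight Λ (α : A)) = Y := SetLike.coe_injective <|
      ((congrArg SetLike.coe hα).trans (coe_mul_span_singleton _ _)).symm
    exact ⟨(X.equivMapOfInjective _ α.mulRight_bijective.injective).trans
      (LinearEquiv.ofEq _ _ hmap)⟩

end RightMultiplication

section RestrictScalars

variable {R A : Type*} [CommSemiring R] [Semiring A] [Algebra R A] {Λ : Subalgebra R A}

theorem exists_restrictScalars_eq_of_mul_mem {X : Submodule R A}
    (hX : ∀ l ∈ Λ, ∀ x ∈ X, l * x ∈ X) :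
    ∃ X' : Submodule Λ A, X'.restrictScalars R = X :=
  ⟨{ X with smul_mem' := fun l x hx ↦ hX l l.2 x hx }, rfl⟩

theorem exists_linearEquiv_restrictScalars_iff {X Y : Submodule Λ A} :
    (∃ e : X.restrictScalars R ≃ₗ[R] Y.restrictScalars R,
      ∀ l ∈ Λ, ∀ x x' : X.restrictScalars R, (x' : A) = l * (x : A) →
        (e x' : A) = l * (e x : A)) ↔ Nonempty (X ≃ₗ[Λ] Y) := by
  constructor
  · rintro ⟨e, he⟩
    exact ⟨{ e with map_smul' := fun l x ↦ Subtype.ext (he l l.2 x (l • x : X) rfl) }⟩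
  · rintro ⟨e⟩
    refine ⟨e.restrictScalars R, fun l hl x x' hx ↦ ?_⟩
    have hx' : x' = (⟨l, hl⟩ : Λ) • (show X from x) := Subtype.ext hx
    exact congrArg Subtype.val ((congrArg e hx').trans (map_smul e _ _))

end RestrictScalars

theorem stmt_4_general {R K A : Type*} [CommRing R] [IsNoetherianRing R]
    (S : Submonoid R) [CommRing K] [Algebra R K] [IsLocalization S K]
    [Ring A] [Algebra K A] [Algebra R A] [IsScalarTower R K A]
    (Λ : Subalgebra R A) (hΛ : span K (Λ : Set A) = ⊤)
    (X Y : Submodule R A) (hX : IsLattice K X) (hY : IsLattice K Y)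
    (hXΛ : ∀ l ∈ Λ, ∀ x ∈ X, l * x ∈ X) (hYΛ : ∀ l ∈ Λ, ∀ y ∈ Y, l * y ∈ Y) :
    (IsLattice K (rightColon Y X) ∧
        ∀ μ ∈ rightOrder X, ∀ c ∈ rightColon Y X, μ * c ∈ rightColon Y X) ∧
      ((∃ e : X ≃ₗ[R] Y, ∀ l ∈ Λ, ∀ x x' : X, (x' : A) = l * (x : A) →
          (e x' : A) = l * (e x : A)) ↔
        ∃ α : Aˣ, (rightColon Y X : Set A) = (fun μ ↦ μ * (α : A)) '' rightOrder X ∧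
          X * rightColon Y X = Y) ∧
      ∀ α : Aˣ, (rightColon Y X : Set A) = (fun μ ↦ μ * (α : A)) '' rightOrder X →
        X * rightColon Y X = Y → (Y : Set A) = (fun x ↦ x * (α : A)) '' X := by
  have hα (α : Aˣ) : ((rightColon Y X : Set A) = (fun μ ↦ μ * (α : A)) '' rightOrder X ∧
      X * rightColon Y X = Y) ↔ Y = X * span R {(α : A)} := by
    rw [← rightColon_eq_and_mul_rightColon_eq_iff, ← SetLike.coe_set_eq (p := rightColon Y X),
      coe_mul_span_singleton, Subalgebra.coe_toSubmodule]
  refine ⟨⟨isLattice_rightColon S hX hY, fun _ hμ _ hc ↦ mul_mem_rightColon hμ hc⟩, ?_,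
    fun α hC hXC ↦ ?_⟩
  · simp only [hα]
    obtain ⟨X, rfl⟩ := exists_restrictScalars_eq_of_mul_mem hXΛ
    obtain ⟨Y, rfl⟩ := exists_restrictScalars_eq_of_mul_mem hYΛ
    exact exists_linearEquiv_restrictScalars_iff.trans
      (nonempty_linearEquiv_iff_exists_eq_mul_span_singleton S hΛ hX.span_eq_top hY.span_eq_top)
  · rw [← coe_mul_span_singleton, ← (hα α).1 ⟨hC, hXC⟩]

/-- Let `R` be a noetherian integral domain with field of fractions `K ≠ R`, `A` a
finite-dimensional `K`-algebra, `Λ` an `R`-order in `A`, and let `X, Y` be full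
`Λ`-lattices in `A`.  Then `C := { c ∈ A : Xc ⊆ Y }` is a full `O_r(X)`-lattice in `A`,
where `O_r(X) = { μ ∈ A : Xμ ⊆ X }` is the right order of `X`.  Moreover, `X` and `Y` are
isomorphic as `Λ`-modules if and only if (a) there exists `α ∈ A^×` with `C = O_r(X)·α`
and (b) `Y = XC`; and when this is the case, `Y = Xα`. -/
theorem stmt_4 {R K A : Type*}
    [CommRing R] [IsDomain R] [IsNoetherianRing R]
    [Field K] [Algebra R K] [IsFractionRing R K]
    (hRK : ¬Function.Surjective (algebraMap R K))
    [Ring A] [Algebra K A] [FiniteDimensional K A]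
    [Algebra R A] [IsScalarTower R K A]
    (Λ : Subalgebra R A)
    (hΛfg : (Subalgebra.toSubmodule Λ).FG)
    (hΛfull : Submodule.span K (Λ : Set A) = ⊤)
    (X Y : Submodule R A) (hXfg : X.FG) (hYfg : Y.FG)
    (hXΛ : ∀ l ∈ Λ, ∀ x ∈ X, l * x ∈ X) (hYΛ : ∀ l ∈ Λ, ∀ y ∈ Y, l * y ∈ Y)
    (hXfull : Submodule.span K (X : Set A) = ⊤)
    (hYfull : Submodule.span K (Y : Set A) = ⊤) :
    -- `C` is a full `O_r(X)`-lattice in `A`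
    ((∃ N : Submodule R A,
        (N : Set A) = {c : A | ∀ x ∈ X, x * c ∈ Y} ∧ N.FG ∧
          Submodule.span K {c : A | ∀ x ∈ X, x * c ∈ Y} = ⊤ ∧
          ∀ μ : A, (∀ x ∈ X, x * μ ∈ X) →
            ∀ c ∈ {c : A | ∀ x ∈ X, x * c ∈ Y}, μ * c ∈ {c : A | ∀ x ∈ X, x * c ∈ Y}) ∧
      -- the isomorphism criterion
      ((∃ e : ↥X ≃ₗ[R] ↥Y,
          ∀ l ∈ Λ, ∀ (x : ↥X) (x' : ↥X), (x' : A) = l * (x : A) →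
            (e x' : A) = l * (e x : A)) ↔
        (∃ α : Aˣ,
          {c : A | ∀ x ∈ X, x * c ∈ Y} =
              (fun μ : A => μ * (α : A)) '' {μ : A | ∀ x ∈ X, x * μ ∈ X} ∧
            Submodule.span R
                (Set.image2 (· * ·) (X : Set A) {c : A | ∀ x ∈ X, x * c ∈ Y}) = Y)) ∧
      -- furthermore, `Y = Xα`
      (∀ α : Aˣ,
        {c : A | ∀ x ∈ X, x * c ∈ Y} =
            (fun μ : A => μ * (α : A)) '' {μ : A | ∀ x ∈ X, x * μ ∈ X} →
          Submodule.span R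
              (Set.image2 (· * ·) (X : Set A) {c : A | ∀ x ∈ X, x * c ∈ Y}) = Y →
          (Y : Set A) = (fun x : A => x * (α : A)) '' (X : Set A))) := by
  have h := stmt_4_general R⁰ Λ hΛfull X Y ⟨hXfg, hXfull⟩ ⟨hYfg, hYfull⟩ hXΛ hYΛ
  simp only [mul_eq_span_mul_set] at h
  exact ⟨⟨rightColon Y X, rfl, h.1.1.fg, h.1.1.span_eq_top, h.1.2⟩, h.2⟩
end

section
/- Two Λ-lattices X and Y are isomorphic as Λ-modules if and only if: (a) X and Y are locally isomorphic, i.e. for every maximal ideal 𝔭 of R the Λ_𝔭-lattices X_𝔭 and Y_𝔭 are isomorphic, and (b) the End_Λ(Y)-module Hom_Λ(X, Y) is free of rank 1. Furthermore, when this is the case, every free generator of Hom_Λ(X, Y) over End_Λ(Y) is an isomorphism X → Y. -/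
/-!
If `g` generates `Hom_Λ(X, Y)` over `End_Λ(Y)`, then every local isomorphism `e : X_𝔭 ≃ Y_𝔭`
becomes, after clearing denominators, the localisation of a map `h ∘ g`. Hence `h_𝔭 ∘ g_𝔭 = s e_𝔭`
is bijective for some `s ∉ 𝔭`, so `h_𝔭` is a surjective endomorphism of the finitely generated
`R_𝔭`-module `Y_𝔭`. By Orzech's theorem `h_𝔭` is bijective, and therefore so is `g_𝔭`. Bijectivity
of `g` is a local property.
-/

open Function LocalizedModule

theorem bijective_of_bijective_end_comp {R M N : Type*} [Semiring R] [OrzechProperty R]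
    [AddCommMonoid M] [Module R M] [AddCommMonoid N] [Module R N] [Module.Finite R N]
    (h : Module.End R N) (g : M →ₗ[R] N) (hhg : Bijective (h ∘ₗ g)) : Bijective g := by
  rw [LinearMap.coe_comp] at hhg
  have hh : Bijective h := OrzechProperty.bijective_of_surjective_endomorphism h hhg.2.of_comp
  exact (Bijective.of_comp_iff' hh g).1 hhg

theorem mkLinearMap_injective_of_le_nonZeroDivisors {R M : Type*} [CommRing R] {S : Submonoid R}
    [AddCommMonoid M] [Module R M] [Module.IsTorsionFree R M] (hS : S ≤ nonZeroDivisors R) :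
    Injective (mkLinearMap S M) :=
  (IsLocalizedModule.injective_iff_isRegular S _).2 fun c ↦
    (isRegular_iff_mem_nonZeroDivisors.2 (hS c.2)).isSMulRegular

theorem exists_lift_of_isLocalizedModule_of_injective {R M N N' : Type*} [CommSemiring R]
    (S : Submonoid R) [AddCommMonoid M] [Module R M] [Module.Finite R M]
    [AddCommMonoid N] [Module R N] [AddCommMonoid N'] [Module R N']
    (f : N →ₗ[R] N') [IsLocalizedModule S f] (hf : Injective f) (φ : M →ₗ[R] N') :
    ∃ (h : M →ₗ[R] N) (s : S), f ∘ₗ h = (s : R) • φ := by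
  obtain ⟨t, ht⟩ := Module.Finite.fg_top (R := R) (M := M)
  obtain ⟨s, hs⟩ := IsLocalizedModule.exist_integer_multiples S f t φ
  have hrange : ∀ x, ((s : R) • φ) x ∈ LinearMap.range f := by
    have hspan : Submodule.span R t ≤ (LinearMap.range f).comap ((s : R) • φ) :=
      Submodule.span_le.2 hs
    exact fun x ↦ hspan (ht ▸ Submodule.mem_top)
  refine ⟨(LinearEquiv.ofInjective f hf).symm ∘ₗ ((s : R) • φ).codRestrict _ hrange, s, ?_⟩
  ext x
  exact congrArg Subtype.val ((LinearEquiv.ofInjective f hf).apply_symm_apply _)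

theorem smul_eq_mk_one_iff {R M : Type*} [CommSemiring R] {S : Submonoid R} [AddCommMonoid M]
    [Module R M] {s : S} {z : LocalizedModule S M} {m : M} :
    (s : R) • z = mk m 1 ↔ z = mk m s := by
  have h : (s : R) • mk m s = mk m 1 := (smul'_mk (s : R) m s).trans (mk_cancel s m)
  rw [← h]
  exact (IsLocalizedModule.smul_injective (mkLinearMap S M) s).eq_iff

section FreeGenerator

variable {Λ X Y : Type*} [Semiring Λ] [AddCommMonoid X] [Module Λ X] [AddCommMonoid Y] [Module Λ Y]

/-- `g` is a free generator of `Hom_Λ(X, Y)` as a module over `End_Λ(Y)`, which acts by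
post-composition; such a `g` exists if and only if that module is free of rank one. -/
def IsFreeGenerator (g : X →ₗ[Λ] Y) : Prop :=
  Bijective fun e : Module.End Λ Y ↦ e ∘ₗ g

theorem IsFreeGenerator.of_linearEquiv (f : X ≃ₗ[Λ] Y) : IsFreeGenerator (f : X →ₗ[Λ] Y) :=
  bijective_iff_has_inverse.2
    ⟨fun k ↦ k ∘ₗ (f.symm : Y →ₗ[Λ] X), fun e ↦ by ext; simp, fun k ↦ by ext; simp⟩

end FreeGenerator

section Localization

variable {R : Type*} (Λ : Type*) {X Y : Type*} [CommRing R] [Semiring Λ]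
  [AddCommMonoid X] [Module R X] [Module Λ X] [AddCommMonoid Y] [Module R Y] [Module Λ Y]

/-- `φ : X_S → Y_S` commutes with the action `l • (x / s) = (l • x) / s` of `Λ` on fractions.
The condition is phrased on representatives because there is no instance making
`LocalizedModule S X` a `Λ`-module. -/
def IsLocalizedEquivariant {S : Submonoid R}
    (φ : LocalizedModule S X → LocalizedModule S Y) : Prop :=
  ∀ (l : Λ) (x : X) (s : S) (y : Y) (t : S),
    φ (mk x s) = mk y t → φ (mk (l • x) s) = mk (l • y) t

variable (R X Y) in
/-- `X` and `Y` are locally isomorphic: for every maximal ideal `𝔭` of `R` there is an isomorphism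
of `Λ_𝔭`-modules `X_𝔭 ≃ Y_𝔭`, encoded as an `R_𝔭`-linear equivalence compatible with `Λ`. -/
def LocallyIsomorphic : Prop :=
  ∀ (𝔭 : Ideal R) [𝔭.IsMaximal],
    ∃ e : LocalizedModule 𝔭.primeCompl X ≃ₗ[Localization.AtPrime 𝔭] LocalizedModule 𝔭.primeCompl Y,
      IsLocalizedEquivariant Λ e

variable {Λ}

theorem IsLocalizedEquivariant.map_smul_of_apply_mk_eq {S : Submonoid R}
    {φ : LocalizedModule S X → LocalizedModule S Y} (hφ : IsLocalizedEquivariant Λ φ)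
    (hY : Injective (mkLinearMap S Y)) {f : X → Y} {s : S}
    (hf : ∀ x, φ (mk x 1) = mk (f x) s) (l : Λ) (x : X) : f (l • x) = l • f x := by
  have h : mk (f (l • x)) s = mk (l • f x) s := (hf _).symm.trans (hφ l x 1 (f x) s (hf x))
  exact hY ((smul_eq_mk_one_iff.2 rfl).symm.trans (smul_eq_mk_one_iff.2 h))

variable [Algebra R Λ] [IsScalarTower R Λ X] [IsScalarTower R Λ Y]

theorem IsLocalizedEquivariant.map (S : Submonoid R) (f : X →ₗ[Λ] Y) :
    IsLocalizedEquivariant Λ (LocalizedModule.map S (f.restrictScalars R)) := by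
  intro l x s y t h
  simpa using congrArg (LocalizedModule.map S (Algebra.lsmul R R Y l)) h

theorem LocallyIsomorphic.of_linearEquiv (f : X ≃ₗ[Λ] Y) : LocallyIsomorphic R Λ X Y :=
  fun 𝔭 _ ↦
    ⟨IsLocalizedModule.mapEquiv 𝔭.primeCompl (mkLinearMap _ X) (mkLinearMap _ Y)
        (Localization.AtPrime 𝔭) (f.restrictScalars R),
      IsLocalizedEquivariant.map 𝔭.primeCompl (f : X →ₗ[Λ] Y)⟩

theorem IsLocalizedEquivariant.exists_map_eq_smul [Module.Finite R X] {S : Submonoid R}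
    (hY : Injective (mkLinearMap S Y))
    {φ : LocalizedModule S X →ₗ[Localization S] LocalizedModule S Y}
    (hφ : IsLocalizedEquivariant Λ φ) :
    ∃ (f : X →ₗ[Λ] Y) (s : S), LocalizedModule.map S (f.restrictScalars R) = (s : R) • φ := by
  obtain ⟨f, s, hfs⟩ := exists_lift_of_isLocalizedModule_of_injective S _ hY
    (φ.restrictScalars R ∘ₗ mkLinearMap S X)
  have hf (x : X) : φ (mk x 1) = mk (f x) s :=
    smul_eq_mk_one_iff.1 (LinearMap.congr_fun hfs x).symm
  refine ⟨⟨f.toAddHom, hφ.map_smul_of_apply_mk_eq hY hf⟩, s, ?_⟩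
  apply LinearMap.restrictScalars_injective R
  apply IsLocalizedModule.linearMap_ext S (mkLinearMap S X) (mkLinearMap S Y)
  ext x
  simpa using LinearMap.congr_fun hfs x

theorem IsFreeGenerator.bijective_map [Module.Finite R X] [Module.Finite R Y] {S : Submonoid R}
    {g : X →ₗ[Λ] Y} (hg : IsFreeGenerator g) (hY : Injective (mkLinearMap S Y))
    (e : LocalizedModule S X ≃ₗ[Localization S] LocalizedModule S Y)
    (he : IsLocalizedEquivariant Λ e) :
    Bijective (LocalizedModule.map S (g.restrictScalars R)) := by
  obtain ⟨f, s, hf⟩ := IsLocalizedEquivariant.exists_map_eq_smul (φ := e.toLinearMap) hY he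
  obtain ⟨h, rfl⟩ := hg.surjective f
  have hcomp : LocalizedModule.map S (h.restrictScalars R) ∘ₗ
      LocalizedModule.map S (g.restrictScalars R) = (s : R) • e.toLinearMap := by
    rw [← hf]
    ext z
    induction z using LocalizedModule.induction_on with
    | h x t => simp
  have hs : Bijective fun z : LocalizedModule S Y ↦ (s : R) • z :=
    (Module.End.isUnit_iff _).1 (IsLocalizedModule.map_units (mkLinearMap S Y) s)
  have : Module.Finite (Localization S) (LocalizedModule S Y) :=
    .of_isLocalizedModule S (mkLinearMap S Y)
  apply bijective_of_bijective_end_comp (LocalizedModule.map S (h.restrictScalars R))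
  rw [hcomp]
  exact hs.comp e.bijective

theorem IsFreeGenerator.bijective_of_locallyIsomorphic [IsDomain R] [Module.Finite R X]
    [Module.Finite R Y] [Module.IsTorsionFree R Y] {g : X →ₗ[Λ] Y} (hg : IsFreeGenerator g)
    (hXY : LocallyIsomorphic R Λ X Y) : Bijective g := by
  apply bijective_of_localized_maximal (g.restrictScalars R)
  intro 𝔭 _
  obtain ⟨e, he⟩ := hXY 𝔭
  exact hg.bijective_map
    (mkLinearMap_injective_of_le_nonZeroDivisors 𝔭.primeCompl_le_nonZeroDivisors) e he

end Localization

theorem stmt_5_general {R Λ X Y : Type*} [CommRing R] [IsDomain R] [Semiring Λ] [Algebra R Λ]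
    [AddCommMonoid X] [Module R X] [Module Λ X] [IsScalarTower R Λ X] [Module.Finite R X]
    [AddCommMonoid Y] [Module R Y] [Module Λ Y] [IsScalarTower R Λ Y] [Module.Finite R Y]
    [Module.IsTorsionFree R Y] :
    (Nonempty (X ≃ₗ[Λ] Y) ↔
      LocallyIsomorphic R Λ X Y ∧ ∃ g : X →ₗ[Λ] Y, IsFreeGenerator g) ∧
    (Nonempty (X ≃ₗ[Λ] Y) → ∀ g : X →ₗ[Λ] Y, IsFreeGenerator g → Bijective g) := by
  refine ⟨⟨fun ⟨f⟩ ↦ ⟨.of_linearEquiv f, f, .of_linearEquiv f⟩, fun ⟨hXY, g, hg⟩ ↦ ?_⟩,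
    fun ⟨f⟩ g hg ↦ hg.bijective_of_locallyIsomorphic (R := R) (.of_linearEquiv f)⟩
  exact ⟨.ofBijective g (hg.bijective_of_locallyIsomorphic hXY)⟩

/-- Let `R` be a noetherian integral domain with field of fractions `K ≠ R`, `A` a
finite-dimensional `K`-algebra and `Λ` an `R`-order in `A`.  Two `Λ`-lattices `X` and `Y`
are isomorphic as `Λ`-modules if and only if
(a) `X` and `Y` are locally isomorphic, i.e. for every maximal ideal `𝔭` of `R` the
`Λ_𝔭`-lattices `X_𝔭` and `Y_𝔭` are isomorphic (an `R_𝔭`-linear isomorphism of the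
localised modules commuting with the `Λ`-action), and
(b) the `End_Λ(Y)`-module `Hom_Λ(X, Y)` is free of rank 1.
Furthermore, when this is the case, every free generator of `Hom_Λ(X, Y)` over
`End_Λ(Y)` is an isomorphism `X → Y`. -/
theorem stmt_5 {R K A : Type*}
    [CommRing R] [IsDomain R] [IsNoetherianRing R]
    [Field K] [Algebra R K] [IsFractionRing R K]
    (hRK : ¬Function.Surjective (algebraMap R K))
    [Ring A] [Algebra K A] [FiniteDimensional K A]
    [Algebra R A] [IsScalarTower R K A]
    (Λ : Subalgebra R A)
    (hΛfg : (Subalgebra.toSubmodule Λ).FG)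
    (hΛfull : Submodule.span K (Λ : Set A) = ⊤)
    (X Y : Type*)
    [AddCommGroup X] [Module R X] [Module Λ X] [IsScalarTower R Λ X]
    [Module.Finite R X] [NoZeroSMulDivisors R X]
    [AddCommGroup Y] [Module R Y] [Module Λ Y] [IsScalarTower R Λ Y]
    [Module.Finite R Y] [NoZeroSMulDivisors R Y] :
    (Nonempty (X ≃ₗ[Λ] Y) ↔
      ((∀ (𝔭 : Ideal R) [𝔭.IsMaximal],
          ∃ e : LocalizedModule 𝔭.primeCompl X ≃ₗ[Localization.AtPrime 𝔭]
              LocalizedModule 𝔭.primeCompl Y,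
            ∀ (l : Λ) (x : X) (s : 𝔭.primeCompl) (y : Y) (t : 𝔭.primeCompl),
              e (LocalizedModule.mk x s) = LocalizedModule.mk y t →
                e (LocalizedModule.mk (l • x) s) = LocalizedModule.mk (l • y) t) ∧
        (∃ g : X →ₗ[Λ] Y,
          Function.Bijective (fun e : Module.End Λ Y => e ∘ₗ g)))) ∧
    (Nonempty (X ≃ₗ[Λ] Y) →
      ∀ g : X →ₗ[Λ] Y,
        Function.Bijective (fun e : Module.End Λ Y => e ∘ₗ g) →
          Function.Bijective g) :=
  stmt_5_general
end

section
/- Let X be a full Λ-lattice in A and let h : A → A/J(A) be the canonical projection onto the quotient of A by its Jacobson radical; write ᾱ = h(α), Λ̄ = h(Λ), X̄ = h(X). Then X̄ is a full Λ̄-lattice in Ā := A/J(A). Moreover, for α ∈ X: (a) if X = Λα then X̄ = Λ̄ᾱ; (b) if X̄ = Λ̄ᾱ, then either X = Λα or X ≠ Λβ for all β ∈ X. -/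
/-!
Suppose `X = Λβ` and `h(X) = h(Λ)h(α)` with `α ∈ X`. Write `α = lβ` and `h(β) = h(m)h(α)` with
`l, m ∈ Λ`, so `h(β) = h(ml)h(β)`. Fullness makes right multiplication by `h(β)` surjective, hence
injective, on the finite module `h(A)`, so `h(ml) = 1`. The kernel of `h` is nil (as `J(A)` is,
`A` being artinian), so `ml` is unipotent; the inverse of a unipotent element is a polynomial in it
and so lies in `Λ`, whence `β ∈ Λα`.
-/

theorem image_image_mul_right {A B F : Type*} [Mul A] [Mul B] [FunLike F A B] [MulHomClass F A B]
    (h : F) (S : Set A) (a : A) :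
    h '' ((fun x : A => x * a) '' S) = (fun y : B => y * h a) '' (h '' S) :=
  Set.image_comm fun x => map_mul h x a

theorem isRightRegular_of_span_image_mul_right_eq_top {K B : Type*}
    [CommRing K] [Ring B] [Algebra K B] [Module.Finite K B] {S : Set B} {b : B}
    (hS : Submodule.span K ((fun x : B => x * b) '' S) = ⊤) : IsRightRegular b := by
  have mulRight_surjective : Function.Surjective (LinearMap.mulRight K b) := by
    rw [← LinearMap.range_eq_top, eq_top_iff, ← hS, Submodule.span_le]
    exact Set.image_subset_range _ _
  exact OrzechProperty.injective_of_surjective_endomorphism _ mulRight_surjective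

theorem isNilpotent_of_mem_jacobson {A : Type*} [Ring A] [IsSemiprimaryRing A] {a : A}
    (ha : a ∈ Ring.jacobson A) : IsNilpotent a := by
  obtain ⟨n, hn⟩ := IsSemiprimaryRing.isNilpotent (R := A)
  exact ⟨n, by simpa only [hn, Ideal.zero_eq_bot, Ideal.mem_bot] using Ideal.pow_mem_pow ha n⟩

section NilKernel

variable {A B S : Type*} [Ring A] [Ring B] [SetLike S A] [SubringClass S A]

theorem exists_mem_mul_eq_one_of_isNilpotent_sub_one {Λ : S} {a : A} (ha : a ∈ Λ)
    (hnil : IsNilpotent (a - 1)) : ∃ u ∈ Λ, u * a = 1 := by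
  lift a to Λ using ha
  have hnilΛ : IsNilpotent (a - 1) :=
    (IsNilpotent.map_iff (f := SubringClass.subtype Λ) Subtype.val_injective).mp
      (by simpa using hnil)
  obtain ⟨u, hu⟩ := (add_sub_cancel 1 a ▸ hnilΛ.isUnit_one_add).exists_left_inv
  exact ⟨u, u.2, congrArg Subtype.val hu⟩

theorem image_mul_right_eq_of_map_mem (h : A →+* B) (hnil : ∀ a, h a = 0 → IsNilpotent a)
    (Λ : S) {α β : A} (hβ : IsRightRegular (h β))
    (hαβ : α ∈ (fun l : A => l * β) '' (Λ : Set A))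
    (hβα : h β ∈ h '' ((fun l : A => l * α) '' (Λ : Set A))) :
    (fun l : A => l * α) '' (Λ : Set A) = (fun l : A => l * β) '' (Λ : Set A) := by
  obtain ⟨l, hl, rfl⟩ := hαβ
  obtain ⟨_, ⟨m, hm, rfl⟩, hm_map⟩ := hβα
  have map_ml : h (m * l) = 1 := hβ <| by
    simpa only [map_mul, mul_assoc, one_mul] using hm_map
  obtain ⟨u, hu, hu_inv⟩ : ∃ u ∈ Λ, u * (m * l) = 1 :=
    exists_mem_mul_eq_one_of_isNilpotent_sub_one (mul_mem hm hl)
      (hnil _ (by rw [map_sub, map_ml, map_one, sub_self]))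
  apply Set.Subset.antisymm
  · rintro _ ⟨p, hp, rfl⟩
    exact ⟨p * l, mul_mem hp hl, mul_assoc p l β⟩
  · rintro _ ⟨p, hp, rfl⟩
    refine ⟨p * (u * m), mul_mem hp (mul_mem hu hm), ?_⟩
    calc p * (u * m) * (l * β) = p * (u * (m * l)) * β := by simp only [mul_assoc]
      _ = p * β := by rw [hu_inv, mul_one]

end NilKernel

theorem stmt_6_general {R K A B : Type*}
    [CommRing R] [CommRing K] [Algebra R K]
    [Ring A] [Algebra K A] [Algebra R A] [IsScalarTower R K A]
    [Ring B] [Algebra K B] [Algebra R B] [IsScalarTower R K B]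
    (h : A →ₐ[K] B) (hsurj : Function.Surjective h) (hnil : ∀ a, h a = 0 → IsNilpotent a)
    (Λ : Subalgebra R A)
    (X : Submodule R A) (hXfg : X.FG)
    (hXΛ : ∀ l ∈ Λ, ∀ x ∈ X, l * x ∈ X)
    (hXfull : Submodule.span K (X : Set A) = ⊤)
    (α : A) (hα : α ∈ X) :
    ((∃ N : Submodule R B,
        (N : Set B) = h '' (X : Set A) ∧ N.FG ∧
          Submodule.span K (h '' (X : Set A)) = ⊤ ∧
          ∀ l ∈ Λ, ∀ y ∈ h '' (X : Set A), h l * y ∈ h '' (X : Set A)) ∧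
      ((X : Set A) = (fun l : A => l * α) '' (Λ : Set A) →
        h '' (X : Set A) = (fun l : B => l * h α) '' (h '' (Λ : Set A))) ∧
      (h '' (X : Set A) = (fun l : B => l * h α) '' (h '' (Λ : Set A)) →
        ((X : Set A) = (fun l : A => l * α) '' (Λ : Set A) ∨
          ∀ β ∈ X, (X : Set A) ≠ (fun l : A => l * β) '' (Λ : Set A)))) := by
  have span_map : Submodule.span K (h '' (X : Set A)) = ⊤ := by
    rw [← AlgHom.coe_toLinearMap, Submodule.span_image, hXfull, Submodule.map_top]
    exact LinearMap.range_eq_top.2 hsurj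
  have hXbar : (X.map (h.toLinearMap.restrictScalars R) : Set B) = h '' (X : Set A) :=
    Submodule.map_coe _ _
  have hXbar_fg := hXfg.map (h.toLinearMap.restrictScalars R)
  refine ⟨⟨_, hXbar, hXbar_fg, span_map, ?_⟩, ?_, ?_⟩
  · rintro l hl _ ⟨x, hx, rfl⟩
    exact ⟨l * x, hXΛ l hl x hx, map_mul h l x⟩
  · intro hX
    rw [hX, image_image_mul_right]
  · refine fun hbar => or_iff_not_imp_right.mpr fun hcyclic => ?_
    push Not at hcyclic
    obtain ⟨β, hβ, hXβ⟩ := hcyclic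
    have : Module.Finite K B := ⟨by simpa only [hXbar, span_map] using hXbar_fg.span (A := K)⟩
    have hβ_regular : IsRightRegular (h β) := isRightRegular_of_span_image_mul_right_eq_top
      (by rwa [hXβ, image_image_mul_right] at span_map)
    have hβ_mem : h β ∈ h '' ((fun l : A => l * α) '' (Λ : Set A)) := by
      rw [image_image_mul_right, ← hbar]
      exact Set.mem_image_of_mem h hβ
    rw [hXβ]
    exact (image_mul_right_eq_of_map_mem (h : A →+* B) hnil Λ hβ_regular
      (hXβ ▸ hα) hβ_mem).symm

/-- Let `R` be a noetherian integral domain with field of fractions `K ≠ R`, `A` a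
finite-dimensional `K`-algebra, `Λ` an `R`-order in `A`, and `X` a full `Λ`-lattice in `A`.
Let `h : A → Ā = A/J(A)` be the canonical projection onto the quotient of `A` by its
Jacobson radical (modelled as a surjective `K`-algebra homomorphism whose kernel is the
Jacobson radical); write `ᾱ = h(α)`, `Λ̄ = h(Λ)`, `X̄ = h(X)`.
Then `X̄` is a full `Λ̄`-lattice in `Ā`.  Moreover, for `α ∈ X`:
(a) if `X = Λα` then `X̄ = Λ̄ᾱ`;
(b) if `X̄ = Λ̄ᾱ`, then either `X = Λα` or `X ≠ Λβ` for all `β ∈ X`. -/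
theorem stmt_6 {R K A B : Type*}
    [CommRing R] [IsDomain R] [IsNoetherianRing R]
    [Field K] [Algebra R K] [IsFractionRing R K]
    (hRK : ¬Function.Surjective (algebraMap R K))
    [Ring A] [Algebra K A] [FiniteDimensional K A]
    [Algebra R A] [IsScalarTower R K A]
    [Ring B] [Algebra K B] [Algebra R B] [IsScalarTower R K B]
    (h : A →ₐ[K] B) (hsurj : Function.Surjective h)
    (hker : RingHom.ker (h : A →+* B) = Ideal.jacobson (⊥ : Ideal A))
    (Λ : Subalgebra R A)
    (hΛfg : (Subalgebra.toSubmodule Λ).FG)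
    (hΛfull : Submodule.span K (Λ : Set A) = ⊤)
    (X : Submodule R A) (hXfg : X.FG)
    (hXΛ : ∀ l ∈ Λ, ∀ x ∈ X, l * x ∈ X)
    (hXfull : Submodule.span K (X : Set A) = ⊤)
    (α : A) (hα : α ∈ X) :
    -- `X̄` is a full `Λ̄`-lattice in `Ā`
    ((∃ N : Submodule R B,
        (N : Set B) = h '' (X : Set A) ∧ N.FG ∧
          Submodule.span K (h '' (X : Set A)) = ⊤ ∧
          ∀ l ∈ Λ, ∀ y ∈ h '' (X : Set A), h l * y ∈ h '' (X : Set A)) ∧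
      -- (a)
      ((X : Set A) = (fun l : A => l * α) '' (Λ : Set A) →
        h '' (X : Set A) = (fun l : B => l * h α) '' (h '' (Λ : Set A))) ∧
      -- (b)
      (h '' (X : Set A) = (fun l : B => l * h α) '' (h '' (Λ : Set A)) →
        ((X : Set A) = (fun l : A => l * α) '' (Λ : Set A) ∨
          ∀ β ∈ X, (X : Set A) ≠ (fun l : A => l * β) '' (Λ : Set A)))) := by
  have : IsArtinianRing A := IsArtinianRing.of_finite K A
  refine stmt_6_general h hsurj (fun a ha => isNilpotent_of_mem_jacobson ?_)
    Λ X hXfg hXΛ hXfull α hα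
  rwa [← Ideal.jacobson_bot, ← hker]
end

section
/- Let X be a left ideal of Λ. If X + 𝔣 = Λ and β ∈ M satisfies MX = Mβ, then the image β̄ of β in M/𝔣 is a unit of M/𝔣, and MX ∩ Λ = X. -/
open NumberField

/-!
Write `1 = x + f` with `x ∈ X` and `f ∈ 𝔣`. As `x ∈ MX = Mβ`, some `γ ∈ M` has `γβ = x ≡ 1` modulo
`𝔣`, and a left inverse that is integral over a commutative base ring is two-sided. Hence right
multiplication by `β` is injective on `M/𝔣`, so that `Mβ ∩ 𝔣 = 𝔣β ⊆ 𝔣MX ⊆ 𝔣X ⊆ X`. Since `X ⊆ MX`,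
the modular law gives `MX ∩ Λ = MX ∩ (X + 𝔣) = X + (MX ∩ 𝔣) = X`.
-/

theorem pow_mul_pow_of_mul_eq_one {S : Type*} [Monoid S] {a b : S} (hab : a * b = 1) {i n : ℕ}
    (hin : i ≤ n) : a ^ i * b ^ n = b ^ (n - i) := by
  rw [← Nat.add_sub_cancel' hin, pow_add, ← mul_assoc, pow_mul_pow_eq_one i hab, one_mul,
    Nat.add_sub_cancel_left]

section IntegralLeftInverse

variable {R S : Type*} [CommRing R] [Ring S] [Algebra R S] {a b : S}

theorem mul_eq_one_symm_of_isIntegral (ha : IsIntegral R a) (hab : a * b = 1) : b * a = 1 := by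
  obtain ⟨p, hp, hpa⟩ := ha
  have he : (1 - b * a) * b = 0 := by rw [sub_mul, mul_assoc, hab, one_mul, mul_one, sub_self]
  have hterm (i : ℕ) (hi : i < p.natDegree) : (1 - b * a) * (a ^ i * b ^ p.natDegree) = 0 := by
    rw [pow_mul_pow_of_mul_eq_one hab hi.le, ← Nat.succ_pred_eq_of_pos (Nat.sub_pos_of_lt hi),
      pow_succ', ← mul_assoc, he, zero_mul]
  -- As `(1 - b * a) * b = 0`, only the leading term of `p` survives.
  have hlead : (1 - b * a) * (Polynomial.aeval a p * b ^ p.natDegree) = 1 - b * a := by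
    rw [Polynomial.aeval_eq_sum_range, Finset.sum_range_succ, hp.coeff_natDegree, one_smul,
      add_mul, pow_mul_pow_eq_one _ hab, mul_add, mul_one, Finset.sum_mul, Finset.mul_sum,
      Finset.sum_eq_zero, zero_add]
    intro i hi
    rw [smul_mul_assoc, mul_smul_comm, hterm i (Finset.mem_range.1 hi), smul_zero]
  rw [Polynomial.aeval_def, hpa, zero_mul, mul_zero] at hlead
  exact (sub_eq_zero.1 hlead.symm).symm

theorem mul_sub_one_mem_symm_of_isIntegral (I : Ideal S) [I.IsTwoSided]
    (ha : IsIntegral R a) (hab : a * b - 1 ∈ I) : b * a - 1 ∈ I := by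
  rw [← Ideal.Quotient.eq, map_mul, map_one] at hab ⊢
  exact mul_eq_one_symm_of_isIntegral (ha.map (Ideal.Quotient.mkₐ R I)) hab

end IntegralLeftInverse

section Submodule

variable {R A : Type*} [CommRing R] [Ring A] [Algebra R A]

theorem exists_mul_sub_one_mem {P X 𝔣 : Submodule R A} {β : A} (hX𝔣 : 1 ∈ X ⊔ 𝔣)
    (hX : X ≤ P.map (LinearMap.mulRight R β)) : ∃ γ ∈ P, γ * β - 1 ∈ 𝔣 := by
  obtain ⟨x, hx, f, hf, hxf⟩ := Submodule.mem_sup.1 hX𝔣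
  obtain ⟨γ, hγ, rfl⟩ := hX hx
  refine ⟨γ, hγ, ?_⟩
  rw [← hxf]
  simpa using hf

theorem map_mulRight_inf_le {P 𝔣 : Submodule R A} {β γ : A} (h𝔣γ : ∀ x ∈ 𝔣, x * γ ∈ 𝔣)
    (hβγ : ∀ m ∈ P, m * (β * γ - 1) ∈ 𝔣) :
    P.map (LinearMap.mulRight R β) ⊓ 𝔣 ≤ 𝔣.map (LinearMap.mulRight R β) := by
  rintro _ ⟨⟨m, hm, rfl⟩, hmβ⟩
  refine ⟨m, ?_, rfl⟩
  have h := 𝔣.sub_mem (h𝔣γ _ hmβ) (hβγ m hm)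
  rwa [LinearMap.mulRight_apply, mul_sub, mul_one, mul_assoc, sub_sub_cancel] at h

theorem mul_sub_one_mem_symm_of_bimodule {M : Subalgebra R A} {𝔣 : Submodule R A}
    (h𝔣 : ∀ m ∈ M, ∀ x ∈ 𝔣, m * x ∈ 𝔣 ∧ x * m ∈ 𝔣) {a b : A} (ha : a ∈ M) (hb : b ∈ M)
    (ha_int : IsIntegral R a) (hab : a * b - 1 ∈ 𝔣) : b * a - 1 ∈ 𝔣 := by
  let I : Ideal M :=
    { 𝔣.toAddSubmonoid.comap M.val with smul_mem' := fun m x hx ↦ (h𝔣 m m.2 x hx).1 }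
  have : I.IsTwoSided := ⟨fun {x} m hx ↦ (h𝔣 m m.2 x hx).2⟩
  have haM_int : IsIntegral R (⟨a, ha⟩ : M) :=
    (isIntegral_algHom_iff M.val Subtype.val_injective).1 ha_int
  exact mul_sub_one_mem_symm_of_isIntegral I (b := ⟨b, hb⟩) haM_int hab

theorem stmt_8_general (Λ M : Subalgebra R A) (hMint : ∀ m ∈ M, IsIntegral R m)
    (𝔣 : Submodule R A) (h𝔣ideal : ∀ m ∈ M, ∀ x ∈ 𝔣, m * x ∈ 𝔣 ∧ x * m ∈ 𝔣)
    (X : Submodule R A) (hXideal : ∀ l ∈ Λ, ∀ x ∈ X, l * x ∈ X)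
    (hX𝔣 : X ⊔ 𝔣 = Subalgebra.toSubmodule Λ) (β : A) (hβ : β ∈ M)
    (hMX : Submodule.span R (Set.image2 (· * ·) (M : Set A) (X : Set A)) =
      Submodule.map (LinearMap.mulRight R β) (Subalgebra.toSubmodule M)) :
    (∃ γ ∈ M, β * γ - 1 ∈ 𝔣 ∧ γ * β - 1 ∈ 𝔣) ∧
      Submodule.span R (Set.image2 (· * ·) (M : Set A) (X : Set A)) ⊓
          Subalgebra.toSubmodule Λ = X := by
  rw [← Subalgebra.coe_toSubmodule M, Set.image2_mul, ← Submodule.mul_eq_span_mul_set] at hMX ⊢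
  have hXMX : X ≤ Subalgebra.toSubmodule M * X :=
    le_mul_of_one_le_left' (Submodule.one_le.2 M.one_mem)
  have h𝔣MX : 𝔣 * (Subalgebra.toSubmodule M * X) ≤ X := by
    rw [← mul_assoc]
    refine Submodule.mul_le.2 fun f hf ↦ hXideal f (hX𝔣.le <| le_sup_right (a := X) ?_)
    exact Submodule.mul_le.2 (fun x hx m hm ↦ (h𝔣ideal m hm x hx).2) hf
  obtain ⟨γ, hγ, hγβ⟩ := exists_mul_sub_one_mem (hX𝔣.ge Λ.one_mem) (hXMX.trans hMX.le)
  have hβγ : β * γ - 1 ∈ 𝔣 := mul_sub_one_mem_symm_of_bimodule h𝔣ideal hγ hβ (hMint γ hγ) hγβ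
  refine ⟨⟨γ, hγ, hβγ, hγβ⟩, ?_⟩
  have hinf : Subalgebra.toSubmodule M * X ⊓ 𝔣 ≤ X := calc
    _ ≤ 𝔣.map (LinearMap.mulRight R β) := hMX ▸ map_mulRight_inf_le
      (fun x hx ↦ (h𝔣ideal γ hγ x hx).2) (fun m hm ↦ (h𝔣ideal m hm _ hβγ).1)
    _ ≤ 𝔣 * (Subalgebra.toSubmodule M * X) := by
      have hβMX : β ∈ Subalgebra.toSubmodule M * X := hMX ▸ ⟨1, M.one_mem, one_mul β⟩
      exact Submodule.map_le_iff_le_comap.2 fun f hf ↦ Submodule.mul_mem_mul hf hβMX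
    _ ≤ X := h𝔣MX
  rw [← hX𝔣, inf_comm, sup_inf_assoc_of_le 𝔣 hXMX, inf_comm, sup_eq_left.2 hinf]

end Submodule

/-- Let `K` be a number field with ring of integers `O`, `A` a finite-dimensional
semisimple `K`-algebra, `Λ` an `O`-order in `A`, `M` a maximal `O`-order with
`Λ ⊆ M ⊆ A`, and `𝔣` a proper full two-sided ideal of `M` contained in `Λ`.
Let `X` be a left ideal of `Λ`.  If `X + 𝔣 = Λ` and `β ∈ M` satisfies `MX = Mβ`,
then the image `β̄` of `β` in `M/𝔣` is a unit of `M/𝔣` (i.e. `β` is invertible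
modulo `𝔣` by an element of `M`), and `MX ∩ Λ = X`. -/
theorem stmt_8 {K A : Type*} [Field K] [NumberField K]
    [Ring A] [Algebra K A] [FiniteDimensional K A] [IsSemisimpleRing A]
    [Algebra (𝓞 K) A] [IsScalarTower (𝓞 K) K A]
    (Λ M : Subalgebra (𝓞 K) A)
    (hΛfg : (Subalgebra.toSubmodule Λ).FG)
    (hΛfull : Submodule.span K (Λ : Set A) = ⊤)
    (hMfg : (Subalgebra.toSubmodule M).FG)
    (hMfull : Submodule.span K (M : Set A) = ⊤)
    (hΛM : Λ ≤ M)
    (hMmax : ∀ M' : Subalgebra (𝓞 K) A, (Subalgebra.toSubmodule M').FG →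
      Submodule.span K (M' : Set A) = ⊤ → M ≤ M' → M' = M)
    (𝔣 : Submodule (𝓞 K) A)
    (h𝔣Λ : 𝔣 ≤ Subalgebra.toSubmodule Λ)
    (h𝔣ideal : ∀ m ∈ M, ∀ x ∈ 𝔣, m * x ∈ 𝔣 ∧ x * m ∈ 𝔣)
    (h𝔣proper : 𝔣 ≠ Subalgebra.toSubmodule M)
    (h𝔣full : Submodule.span K (𝔣 : Set A) = ⊤)
    (X : Submodule (𝓞 K) A)
    (hXΛ : X ≤ Subalgebra.toSubmodule Λ)
    (hXideal : ∀ l ∈ Λ, ∀ x ∈ X, l * x ∈ X)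
    (hX𝔣 : X ⊔ 𝔣 = Subalgebra.toSubmodule Λ)
    (β : A) (hβ : β ∈ M)
    (hMX : Submodule.span (𝓞 K) (Set.image2 (· * ·) (M : Set A) (X : Set A)) =
      Submodule.map (LinearMap.mulRight (𝓞 K) β) (Subalgebra.toSubmodule M)) :
    (∃ γ ∈ M, β * γ - 1 ∈ 𝔣 ∧ γ * β - 1 ∈ 𝔣) ∧
      Submodule.span (𝓞 K) (Set.image2 (· * ·) (M : Set A) (X : Set A)) ⊓
          Subalgebra.toSubmodule Λ = X := by
  exact stmt_8_general Λ M (fun m hm ↦ .of_mem_of_fg M hMfg m hm) 𝔣 h𝔣ideal X hXideal hX𝔣 β hβ hMX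
end

section
/- Let A = ∏_{i=1}^r Mat_{n_i}(K_i) with K_i finite field extensions of a number field K, let M be a maximal O_K-order in A, and let O_C = M ∩ C = ∏ O_{K_i} where C is the centre of A. Then the reduced norm (componentwise determinant) nr : M^× → O_C^× is surjective. -/
open NumberField

set_option synthInstance.maxHeartbeats 1000000
set_option maxHeartbeats 1000000

/-!
Write `Oᵢ` for the integral closure of the base ring `R` in `Fᵢ`. Adjoining an integral central
element to a finite subalgebra keeps it finite, so a maximal order `M` contains `∏ Oᵢ`; hence each
`Oᵢ` is `R`-finite, and is a Dedekind domain. The `Oᵢ`-span of the `i`-th component of `M` applied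
to the standard basis is a lattice `Lᵢ` stable under `M`, so `M` is the product of the left orders
of the `Lᵢ` by maximality. A coordinate functional `f` maps `Lᵢ` onto an invertible fractional
ideal, so there is `w` with `f w = 1` and `f(Lᵢ) w ⊆ Lᵢ`. Then `e = w ⊗ f` is a rank-one idempotent
in the left order of `Lᵢ`, and `(1 - e) + u e` is a unit of it with determinant `u`, for every unit
`u` of `Oᵢ`.
-/

section Splitting

open scoped nonZeroDivisors

variable {O F V : Type*} [CommRing O] [IsDedekindDomain O] [Field F] [Algebra O F]
  [IsFractionRing O F] [AddCommGroup V] [Module F V] [Module O V] [IsScalarTower O F V]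

theorem mul_one_div_eq_one_of_fg {I : Submodule O F} (hI : I.FG) (hI₀ : I ≠ ⊥) :
    I * (1 / I) = 1 := by
  let J : FractionalIdeal O⁰ F := ⟨I, FractionalIdeal.isFractional_of_fg hI⟩
  have hJ₀ : J ≠ 0 := fun h => hI₀ (by simpa [J] using congrArg FractionalIdeal.coeToSubmodule h)
  have hJ : J * (1 / J) = 1 := by
    rw [one_div, mul_inv_cancel₀ hJ₀]
  have hJ' := congrArg FractionalIdeal.coeToSubmodule hJ
  rwa [FractionalIdeal.coe_mul, FractionalIdeal.coe_div hJ₀, FractionalIdeal.coe_one] at hJ'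

theorem exists_apply_eq_one_and_apply_smul_mem {f : V →ₗ[F] F} (hf : f ≠ 0) (L : Submodule O V)
    [L.IsLattice F] : ∃ w : V, f w = 1 ∧ ∀ l ∈ L, f l • w ∈ L := by
  let fO : V →ₗ[O] F := f.restrictScalars O
  let W : Submodule O V := ⨅ l ∈ L, L.comap ((LinearMap.lsmul F V (f l)).restrictScalars O)
  have hW (w : V) : w ∈ W ↔ ∀ l ∈ L, f l • w ∈ L := by simp [W]
  have image_ne_bot : L.map fO ≠ ⊥ := by
    intro h
    have hspan : Submodule.span F (L : Set V) ≤ LinearMap.ker f :=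
      Submodule.span_le.2 (LinearMap.le_ker_iff_map (f := fO).2 h)
    rw [Submodule.IsLattice.span_eq_top, top_le_iff, LinearMap.ker_eq_top] at hspan
    exact hf hspan
  -- If `f l' = a` and `b f(L) ⊆ O`, then `w = b • l'` satisfies `f w = a b` and `f(L) w ⊆ L`.
  have mul_le : L.map fO * (1 / L.map fO) ≤ W.map fO := by
    rw [Submodule.mul_le]
    rintro _ ⟨l', hl', rfl⟩ b hb
    refine ⟨b • l', (hW _).2 fun l hl => ?_, by simp [fO, mul_comm]⟩
    obtain ⟨o, ho⟩ := Submodule.mem_one.1 (hb _ (Submodule.mem_map_of_mem hl))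
    rw [smul_smul, mul_comm, show f l = fO l from rfl, ← ho, algebraMap_smul]
    exact L.smul_mem o hl'
  rw [mul_one_div_eq_one_of_fg (Submodule.IsLattice.fg.map fO) image_ne_bot,
    Submodule.one_le] at mul_le
  obtain ⟨w, hw, hfw⟩ := mul_le
  exact ⟨w, hfw, (hW w).1 hw⟩

end Splitting

section IdempotentDilation

variable {O A : Type*} [CommRing O] [Ring A] [Algebra O A]

/-- The dilation `(1 - e) + c e` along an idempotent `e`, as a monoid homomorphism in `c`. -/
def idempotentDilation {e : A} (he : IsIdempotentElem e) : O →* A where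
  toFun c := 1 + (c - 1) • e
  map_one' := by simp
  map_mul' c d := by
    simp only [add_mul, mul_add, smul_mul_smul_comm, he.eq, one_mul, mul_one]
    module

theorem det_one_add_smul_vecMulVec_single {F m : Type*} [CommRing F] [Fintype m] [DecidableEq m]
    {w : m → F} {j : m} (hw : w j = 1) (c : F) :
    (1 + (c - 1) • Matrix.vecMulVec w (Pi.single j 1)).det = c := by
  rw [← Matrix.smul_vecMulVec, Matrix.vecMulVec_eq Unit,
    Matrix.det_one_add_replicateCol_mul_replicateRow]
  simp [hw]

end IdempotentDilation

section LeftOrder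

open Matrix

variable {O F m : Type*} [CommRing O] [Field F] [Algebra O F] [Fintype m] [DecidableEq m]

/-- The left order of a submodule `L ⊆ F ^ m`: the matrices `x` with `x L ⊆ L`. -/
def leftOrder (L : Submodule O (m → F)) : Subalgebra O (Matrix m m F) where
  carrier := {x | ∀ l ∈ L, x *ᵥ l ∈ L}
  mul_mem' hx hy l hl := by
    rw [← mulVec_mulVec]
    exact hx _ (hy l hl)
  add_mem' hx hy l hl := by
    rw [add_mulVec]
    exact L.add_mem (hx l hl) (hy l hl)
  algebraMap_mem' a l hl := by
    rw [Algebra.algebraMap_eq_smul_one, smul_mulVec, one_mulVec]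
    exact L.smul_mem a hl

theorem finite_leftOrder [IsNoetherianRing O] (L : Submodule O (m → F)) [L.IsLattice F] :
    Module.Finite O (leftOrder L) := by
  let action : leftOrder L →ₗ[O] L →ₗ[O] L :=
    LinearMap.mk₂ O (fun x l => ⟨x.1 *ᵥ l, x.2 l l.2⟩)
      (fun x y l => Subtype.ext (add_mulVec x.1 y.1 l))
      (fun a x l => Subtype.ext (smul_mulVec a x.1 l))
      (fun x l l' => Subtype.ext (mulVec_add x.1 l l'))
      (fun a x l => Subtype.ext (mulVec_smul x.1 a l.1))
  have action_injective : Function.Injective action := by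
    intro x y hxy
    have hspan : mulVecLin x.1 = mulVecLin y.1 :=
      LinearMap.ext_on (Submodule.IsLattice.span_eq_top (M := L)) fun l hl =>
        congrArg Subtype.val (LinearMap.congr_fun hxy ⟨l, hl⟩)
    exact Subtype.ext (mulVec_injective (congrArg DFunLike.coe hspan))
  exact Module.Finite.of_injective action action_injective

theorem exists_unit_leftOrder_det_eq [IsDedekindDomain O] [IsFractionRing O F] [Nonempty m]
    (L : Submodule O (m → F)) [L.IsLattice F] (u : Oˣ) :
    ∃ v : (leftOrder L)ˣ, (v : Matrix m m F).det = algebraMap O F u := by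
  obtain ⟨j⟩ := ‹Nonempty m›
  have proj_ne_zero : (LinearMap.proj j : (m → F) →ₗ[F] F) ≠ 0 := fun h => by
    simpa using LinearMap.congr_fun h (Pi.single j 1)
  obtain ⟨w, hwj, hwL⟩ := exists_apply_eq_one_and_apply_smul_mem proj_ne_zero L
  rw [LinearMap.proj_apply] at hwj
  let e : leftOrder L := ⟨vecMulVec w (Pi.single j 1), fun l hl => by
    simpa [vecMulVec_mulVec] using hwL l hl⟩
  have he : IsIdempotentElem e := Subtype.ext <| by
    simp [e, vecMulVec_mul_vecMulVec, hwj]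
  refine ⟨Units.map (idempotentDilation he) u, ?_⟩
  rw [← det_one_add_smul_vecMulVec_single hwj (algebraMap O F u)]
  simp [idempotentDilation, e, sub_smul]

theorem exists_isLattice_le_leftOrder {R : Type*} [CommRing R] [Algebra R O] [Algebra R F]
    [IsScalarTower R O F] (N : Subalgebra R (Matrix m m F)) [Module.Finite R N] :
    ∃ L : Submodule O (m → F), L.IsLattice F ∧ N ≤ (leftOrder L).restrictScalars R := by
  let E : Submodule R (m → F) := Submodule.span R (Set.range fun j => Pi.single j 1)
  let P : Submodule R (m → F) := Submodule.map₂ (mulVecBilin R R) (Subalgebra.toSubmodule N) E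
  have hP : P.FG :=
    (Module.Finite.iff_fg.1 ‹_›).map₂ _ (Submodule.fg_span (Set.finite_range _))
  have hNP : ∀ x ∈ N, P ≤ P.comap (mulVecBilin R R x) := fun x hx =>
    Submodule.map₂_le.2 fun y hy e he => by
      have := Submodule.apply_mem_map₂ (mulVecBilin R R)
        (show x * y ∈ Subalgebra.toSubmodule N from N.mul_mem hx hy) he
      simpa [mulVec_mulVec] using this
  have single_mem (j : m) : Pi.single j 1 ∈ P := by
    rw [← one_mulVec (Pi.single j (1 : F))]
    exact Submodule.apply_mem_map₂ (mulVecBilin R R)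
      (show 1 ∈ Subalgebra.toSubmodule N from N.one_mem)
      (Submodule.subset_span (Set.mem_range_self j))
  refine ⟨Submodule.span O P, ⟨?_, ?_⟩, fun x hx => ?_⟩
  · obtain ⟨s, hs⟩ := hP
    exact ⟨s, by rw [← hs, Submodule.span_span_of_tower]⟩
  · rw [Submodule.span_span_of_tower, eq_top_iff, ← (Pi.basisFun F m).span_eq,
      Submodule.span_le]
    rintro _ ⟨j, rfl⟩
    simpa using Submodule.subset_span (single_mem j)
  · have : Submodule.span O (P : Set (m → F)) ≤
        (Submodule.span O (P : Set (m → F))).comap (mulVecBilin O O x) :=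
      Submodule.span_le.2 fun l hl => Submodule.subset_span (hNP x hx hl)
    exact this

end LeftOrder

section IntegralClosure

theorem isIntegral_pi {R ι : Type*} {A : ι → Type*} [CommRing R] [Finite ι] [∀ i, Ring (A i)]
    [∀ i, Algebra R (A i)] {x : ∀ i, A i} (hx : ∀ i, IsIntegral R (x i)) : IsIntegral R x := by
  cases nonempty_fintype ι
  choose p hp_monic hp_root using hx
  refine ⟨∏ i, p i, Polynomial.monic_prod_of_monic _ _ fun i _ => hp_monic i, funext fun i => ?_⟩
  obtain ⟨q, hq⟩ := Finset.dvd_prod_of_mem p (Finset.mem_univ i)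
  have hpi : Polynomial.aeval (x i) (p i) = 0 := hp_root i
  change Pi.evalAlgHom R A i (Polynomial.aeval x (∏ i, p i)) = 0
  rw [← Polynomial.aeval_algHom_apply, hq, map_mul, Pi.evalAlgHom_apply, hpi, zero_mul]

theorem isFractionRing_integralClosure (R F : Type*) [CommRing R] [Field F] [Algebra R F]
    [FaithfulSMul R F] [Algebra.IsAlgebraic R F] : IsFractionRing (integralClosure R F) F :=
  integralClosure.isFractionRing_of_algebraic fun _ =>
    (FaithfulSMul.algebraMap_eq_zero_iff R F).1

theorem isDedekindDomain_integralClosure_of_finite (R F : Type*) [CommRing R] [IsNoetherianRing R]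
    [Ring.DimensionLEOne R] [Field F] [Algebra R F] [FaithfulSMul R F] [Algebra.IsAlgebraic R F]
    [Module.Finite R (integralClosure R F)] : IsDedekindDomain (integralClosure R F) :=
  have := isFractionRing_integralClosure R F
  have : Nontrivial R := (algebraMap R F).domain_nontrivial
  { IsNoetherianRing.of_finite R (integralClosure R F),
    Ring.DimensionLEOne.integralClosure R F,
    (isIntegrallyClosed_iff_isIntegrallyClosedIn F).2 inferInstance with }

end IntegralClosure

/-- A maximal `R`-order in `A`: a subalgebra maximal among those finite as `R`-modules. The usual
condition that an order span `A` over the fraction field of `R` is not imposed; it passes to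
overorders, so an order that is maximal among the spanning ones is maximal in this sense. -/
abbrev IsMaximalOrder {R A : Type*} [CommRing R] [Ring A] [Algebra R A] (M : Subalgebra R A) :
    Prop :=
  Maximal (fun N : Subalgebra R A => Module.Finite R N) M

namespace IsMaximalOrder

theorem of_full {R K A : Type*} [CommRing R] [Field K] [Ring A] [Algebra R A] [Module K A]
    {M : Subalgebra R A} (hMfg : Module.Finite R M)
    (hMfull : Submodule.span K (M : Set A) = ⊤)
    (hMmax : ∀ M' : Subalgebra R A, Module.Finite R M' →
      Submodule.span K (M' : Set A) = ⊤ → M ≤ M' → M' = M) :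
    IsMaximalOrder M :=
  ⟨hMfg, fun N hN hMN =>
    (hMmax N hN (top_unique (hMfull ▸ Submodule.span_mono hMN)) hMN).le⟩

theorem mem_of_isIntegral {R A : Type*} [CommRing R] [Ring A] [Algebra R A]
    {M : Subalgebra R A} (hM : IsMaximalOrder M) {z : A}
    (hz : z ∈ Subalgebra.center R A) (hzR : IsIntegral R z) : z ∈ M := by
  have hcomm (x : Algebra.adjoin R {z}) (y : M) : Commute x.1 y.1 := by
    have := Algebra.adjoin_le (Set.singleton_subset_iff.2 hz) x.2
    exact (Subalgebra.mem_center_iff.1 this y).symm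
  let φ := Algebra.TensorProduct.lift (Algebra.adjoin R {z}).val M.val hcomm
  have : Module.Finite R M := hM.prop
  have : Module.Finite R (Algebra.adjoin R {z}) := .of_fg hzR.fg_adjoin_singleton
  have hφ : Module.Finite R φ.range := inferInstanceAs (Module.Finite R φ.toLinearMap.range)
  have hMφ : M ≤ φ.range := fun x hx =>
    ⟨1 ⊗ₜ ⟨x, hx⟩, (Algebra.TensorProduct.lift_tmul ..).trans (one_mul x)⟩
  rw [hM.eq_of_le hφ hMφ]
  exact ⟨⟨z, Algebra.self_mem_adjoin_singleton R z⟩ ⊗ₜ 1,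
    (Algebra.TensorProduct.lift_tmul ..).trans (mul_one z)⟩

variable {R ι : Type*} {m F : ι → Type*} [CommRing R] [Finite ι] [∀ i, Fintype (m i)]
  [∀ i, DecidableEq (m i)] [∀ i, Field (F i)] [∀ i, Algebra R (F i)]
  {M : Subalgebra R (∀ i, Matrix (m i) (m i) (F i))}

theorem scalar_mem_iff_forall_isIntegral [∀ i, Nonempty (m i)] (hM : IsMaximalOrder M)
    (c : ∀ i, F i) :
    (fun i => Matrix.scalar (m i) (c i)) ∈ M ↔ ∀ i, IsIntegral R (c i) := by
  have scalar_integral (i : ι) :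
      IsIntegral R (Matrix.scalar (m i) (c i)) ↔ IsIntegral R (c i) :=
    isIntegral_algHom_iff (Matrix.scalarAlgHom (α := F i) (m i) R) fun _ _ => Matrix.scalar_inj.1
  constructor
  · intro hc i
    have : Module.Finite R M := hM.prop
    have hcR : IsIntegral R (⟨_, hc⟩ : M) := Algebra.IsIntegral.isIntegral _
    exact (scalar_integral i).1 (hcR.map ((Pi.evalAlgHom R _ i).comp M.val))
  · intro hc
    refine hM.mem_of_isIntegral ?_ (isIntegral_pi fun i => (scalar_integral i).2 (hc i))
    exact Subalgebra.mem_center_iff.2 fun x => funext fun i =>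
      ((Matrix.scalar_commute (c i) (Commute.all _) (x i)).eq).symm

theorem finite_integralClosure [IsNoetherianRing R] [∀ i, Nonempty (m i)]
    (hM : IsMaximalOrder M) (i : ι) : Module.Finite R (integralClosure R (F i)) := by
  classical
  have single_integral (x : integralClosure R (F i)) (k : ι) :
      IsIntegral R ((Pi.single i x.1 : ∀ k, F k) k) := by
    obtain rfl | hk := eq_or_ne k i
    · rw [Pi.single_eq_same]
      exact x.2
    · simpa [hk] using isIntegral_zero
  let toCenter : integralClosure R (F i) →ₗ[R] M :=
    ((LinearMap.pi fun k => (Matrix.scalarAlgHom (m k) R).toLinearMap ∘ₗ LinearMap.proj k) ∘ₗ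
      LinearMap.single R F i ∘ₗ (integralClosure R (F i)).val.toLinearMap).codRestrict
        (Subalgebra.toSubmodule M) fun x =>
          (hM.scalar_mem_iff_forall_isIntegral _).2 (single_integral x)
  have toCenter_injective : Function.Injective toCenter := fun x y hxy => by
    have hscalar : Matrix.scalar (m i) ((Pi.single i x.1 : ∀ k, F k) i) =
        Matrix.scalar (m i) ((Pi.single i y.1 : ∀ k, F k) i) :=
      congrFun (congrArg Subtype.val hxy) i
    rw [Matrix.scalar_inj, Pi.single_eq_same, Pi.single_eq_same] at hscalar
    exact Subtype.ext hscalar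
  have : Module.Finite R M := hM.prop
  exact Module.Finite.of_injective toCenter toCenter_injective

theorem exists_eq_pi_leftOrder {O : ι → Type*} [∀ i, CommRing (O i)]
    [∀ i, IsNoetherianRing (O i)] [∀ i, Algebra (O i) (F i)] [∀ i, Algebra R (O i)]
    [∀ i, Module.Finite R (O i)] [∀ i, IsScalarTower R (O i) (F i)] (hM : IsMaximalOrder M) :
    ∃ L : ∀ i, Submodule (O i) (m i → F i), (∀ i, (L i).IsLattice (F i)) ∧
      M = Subalgebra.pi .univ fun i => (leftOrder (L i)).restrictScalars R := by
  have : Module.Finite R M := hM.prop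
  have (i : ι) : Module.Finite R (M.map (Pi.evalAlgHom R _ i)) :=
    Module.Finite.map (Subalgebra.toSubmodule M) (Pi.evalAlgHom R _ i).toLinearMap
  choose L hL hML using fun i =>
    exists_isLattice_le_leftOrder (O := O i) (M.map (Pi.evalAlgHom R _ i))
  refine ⟨L, hL, hM.eq_of_le (Module.Finite.iff_fg.2 (Submodule.fg_pi fun i => ?_))
    fun x hx i _ => hML i ⟨x, hx, rfl⟩⟩
  have := finite_leftOrder (L i)
  exact Module.Finite.iff_fg.1 (Module.Finite.trans (R := R) (O i) (leftOrder (L i)))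

theorem exists_unit_det_eq {O : ι → Type*} [∀ i, CommRing (O i)]
    [∀ i, IsDedekindDomain (O i)] [∀ i, Algebra (O i) (F i)] [∀ i, IsFractionRing (O i) (F i)]
    [∀ i, Algebra R (O i)] [∀ i, Module.Finite R (O i)] [∀ i, IsScalarTower R (O i) (F i)]
    [∀ i, Nonempty (m i)] (hM : IsMaximalOrder M) (u : ∀ i, (O i)ˣ) :
    ∃ v : (∀ i, Matrix (m i) (m i) (F i))ˣ, v.val ∈ M ∧ v⁻¹.val ∈ M ∧
      (fun i => (v.val i).det) = fun i => algebraMap (O i) (F i) (u i) := by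
  obtain ⟨L, hL, rfl⟩ := hM.exists_eq_pi_leftOrder (O := O)
  choose v hv using fun i => exists_unit_leftOrder_det_eq (L i) (u i)
  exact ⟨MulEquiv.piUnits.symm fun i => Units.map (leftOrder (L i)).val.toMonoidHom (v i),
    fun i _ => (v i).val.2, fun i _ => (v i)⁻¹.val.2, funext hv⟩

end IsMaximalOrder

theorem stmt_11_general {R ι : Type*} [CommRing R] [IsNoetherianRing R] [Ring.DimensionLEOne R]
    [Finite ι] {m F : ι → Type*} [∀ i, Fintype (m i)] [∀ i, DecidableEq (m i)]
    [∀ i, Nonempty (m i)] [∀ i, Field (F i)] [∀ i, Algebra R (F i)] [∀ i, FaithfulSMul R (F i)]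
    [∀ i, Algebra.IsAlgebraic R (F i)] {M : Subalgebra R (∀ i, Matrix (m i) (m i) (F i))}
    (hM : IsMaximalOrder M) (c c' : ∀ i, F i) (hc : (fun i => Matrix.scalar (m i) (c i)) ∈ M)
    (hc' : (fun i => Matrix.scalar (m i) (c' i)) ∈ M) (hcc' : c * c' = 1) :
    ∃ v : (∀ i, Matrix (m i) (m i) (F i))ˣ, v.val ∈ M ∧ v⁻¹.val ∈ M ∧
      (fun i => (v.val i).det) = c := by
  have (i : ι) := hM.finite_integralClosure i
  have (i : ι) := isFractionRing_integralClosure R (F i)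
  have (i : ι) := isDedekindDomain_integralClosure_of_finite R (F i)
  let u (i : ι) : (integralClosure R (F i))ˣ := Units.mkOfMulEqOne
    ⟨c i, (hM.scalar_mem_iff_forall_isIntegral c).1 hc i⟩
    ⟨c' i, (hM.scalar_mem_iff_forall_isIntegral c').1 hc' i⟩ (Subtype.ext (congrFun hcc' i))
  exact hM.exists_unit_det_eq u

/-- Let `K` be a number field, `A = ∏_{i=1}^r Mat_{n_i}(K_i)` with the `K_i` finite field
extensions of `K`, let `M` be a maximal `O_K`-order in `A`, and let `O_C = M ∩ C` where the
centre `C = ∏ K_i` embeds in `A` diagonally via scalar matrices.  Then the reduced norm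
(the componentwise determinant) `nr : M^× → O_C^×` is surjective: every element `c` of `C`
lying in `M` and invertible in `O_C` is the reduced norm of a unit of `M`. -/
theorem stmt_11 {K : Type*} [Field K] [NumberField K]
    {r : ℕ} (hr : 0 < r) (n : Fin r → ℕ) (hn : ∀ i, 0 < n i)
    (Kf : Fin r → Type*) [∀ i, Field (Kf i)] [∀ i, Algebra K (Kf i)]
    [∀ i, FiniteDimensional K (Kf i)]
    [∀ i, Algebra (𝓞 K) (Kf i)] [∀ i, IsScalarTower (𝓞 K) K (Kf i)]
    (M : Subalgebra (𝓞 K) (∀ i, Matrix (Fin (n i)) (Fin (n i)) (Kf i)))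
    (hMfg : Module.Finite (𝓞 K) M)
    (hMfull : Submodule.span K (M : Set (∀ i, Matrix (Fin (n i)) (Fin (n i)) (Kf i))) = ⊤)
    (hMmax : ∀ M' : Subalgebra (𝓞 K) (∀ i, Matrix (Fin (n i)) (Fin (n i)) (Kf i)),
      Module.Finite (𝓞 K) M' →
      Submodule.span K (M' : Set (∀ i, Matrix (Fin (n i)) (Fin (n i)) (Kf i))) = ⊤ →
      M ≤ M' → M' = M) :
    ∀ c : ∀ i, Kf i,
      (fun i => Matrix.scalar (Fin (n i)) (c i)) ∈ M →
      (∃ c' : ∀ i, Kf i, (fun i => Matrix.scalar (Fin (n i)) (c' i)) ∈ M ∧ c * c' = 1) →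
      ∃ v : (∀ i, Matrix (Fin (n i)) (Fin (n i)) (Kf i))ˣ,
        (v : ∀ i, Matrix (Fin (n i)) (Fin (n i)) (Kf i)) ∈ M ∧
        ((v⁻¹ : (∀ i, Matrix (Fin (n i)) (Fin (n i)) (Kf i))ˣ) :
          ∀ i, Matrix (Fin (n i)) (Fin (n i)) (Kf i)) ∈ M ∧
        (fun i => ((v : ∀ i, Matrix (Fin (n i)) (Fin (n i)) (Kf i)) i).det) = c := by
  -- The `𝓞 K`-algebra structure on the product in the statement is restricted from `K`; it is not
  -- syntactically the one given by `[∀ i, Algebra (𝓞 K) (Kf i)]`.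
  let algKf (i : Fin r) : Algebra (𝓞 K) (Kf i) := RingOfIntegers.instAlgebra K
  have (i : Fin r) : IsScalarTower (𝓞 K) K (Kf i) := RingOfIntegers.instIsScalarTower K
  rintro c hc ⟨c', hc', hcc'⟩
  have (i : Fin r) : Nonempty (Fin (n i)) := ⟨⟨0, hn i⟩⟩
  have (i : Fin r) : Algebra.IsAlgebraic (𝓞 K) (Kf i) :=
    IsFractionRing.comap_isAlgebraic_iff.2 (inferInstance : Algebra.IsAlgebraic K (Kf i))
  have (i : Fin r) : FaithfulSMul (𝓞 K) (Kf i) := .trans (𝓞 K) K (Kf i)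
  exact stmt_11_general (IsMaximalOrder.of_full hMfg hMfull hMmax) c c' hc hc' hcc'
end

section
/- Let R be a commutative ring, n a positive integer, and A, B ∈ Mat_n(R). Then A and B are similar over R (i.e. there exists C ∈ GL_n(R) with B = CAC⁻¹) if and only if: (a) the C_R(B)-module C_R(A, B) is free of rank 1, and (b) every (equivalently, any) free generator C of C_R(A, B) over C_R(B) lies in GL_n(R). Furthermore, when this is the case, such a generator C satisfies B = CAC⁻¹. -/
/-!
Right multiplication by an invertible intertwiner `C` identifies the centralizer of `B` with the
intertwiners from `A` to `B`, so `C` is a free generator. Two free generators `G` and `H` satisfy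
`H = D * G` and `G = E * H` with `D`, `E` in the centralizer, and freeness forces `D` and `E` to be
mutually inverse; hence one invertible free generator makes all of them invertible.
-/

section Monoid

variable {M : Type*} [Monoid M] {a b g h : M}

/-- `g` is a free generator of the intertwiners from `a` to `b`, that is of the `x` with
`x * a = b * x`, under left multiplication by the centralizer of `b`. For matrices this says that
`g` is a basis of the `C_R(B)`-module `C_R(A, B)`; only the multiplication is needed to state it,
so `M` is a monoid and no module structure is introduced. -/
def IsFreeIntertwiner (a b g : M) : Prop :=
  SemiconjBy g a b ∧ ∀ x, SemiconjBy x a b → ∃! d, Commute d b ∧ x = d * g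

theorem semiconjBy_units_iff_eq_conj {u : Mˣ} :
    SemiconjBy (u : M) a b ↔ b = u * a * ↑u⁻¹ := by
  rw [Units.eq_mul_inv_iff_mul_eq, eq_comm, SemiconjBy]

theorem isConj_iff_exists_units_eq_conj : IsConj a b ↔ ∃ u : Mˣ, b = u * a * ↑u⁻¹ :=
  exists_congr fun _ ↦ semiconjBy_units_iff_eq_conj

namespace IsFreeIntertwiner

theorem of_semiconjBy_units {u : Mˣ} (hu : SemiconjBy (u : M) a b) :
    IsFreeIntertwiner a b u := by
  refine ⟨hu, fun x hx ↦ ⟨x * ↑u⁻¹, ⟨hx.mul_left hu.units_inv_symm_left, ?_⟩, ?_⟩⟩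
  · rw [Units.inv_mul_cancel_right]
  · rintro d ⟨-, hd⟩
    exact u.eq_mul_inv_iff_mul_eq.2 hd.symm

protected theorem mul_right_cancel (hg : IsFreeIntertwiner a b g) {d e : M}
    (hd : Commute d b) (he : Commute e b) (hde : d * g = e * g) : d = e :=
  (hg.2 (d * g) (SemiconjBy.mul_left hd hg.1)).unique ⟨hd, rfl⟩ ⟨he, hde⟩

theorem exists_units_mul_eq (hg : IsFreeIntertwiner a b g) (hh : IsFreeIntertwiner a b h) :
    ∃ u : Mˣ, Commute (u : M) b ∧ u * g = h := by
  obtain ⟨d, ⟨hd, h_eq⟩, -⟩ := hg.2 h hh.1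
  obtain ⟨e, ⟨he, g_eq⟩, -⟩ := hh.2 g hg.1
  have hde : d * e = 1 := hh.mul_right_cancel (hd.mul_left he) (.one_left b) <| by
    rw [mul_assoc, ← g_eq, ← h_eq, one_mul]
  have hed : e * d = 1 := hg.mul_right_cancel (he.mul_left hd) (.one_left b) <| by
    rw [mul_assoc, ← h_eq, ← g_eq, one_mul]
  exact ⟨⟨d, e, hde, hed⟩, hd, h_eq.symm⟩

theorem isUnit_of_isConj (hg : IsFreeIntertwiner a b g) (hab : IsConj a b) : IsUnit g := by
  obtain ⟨c, hc⟩ := hab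
  obtain ⟨u, -, hu⟩ := hg.exists_units_mul_eq (of_semiconjBy_units hc)
  exact (Units.isUnit_units_mul u g).1 (hu ▸ c.isUnit)

end IsFreeIntertwiner

theorem isConj_iff_exists_isFreeIntertwiner_and_forall_isUnit :
    IsConj a b ↔
      (∃ g, IsFreeIntertwiner a b g) ∧ ∀ g, IsFreeIntertwiner a b g → IsUnit g := by
  constructor
  · rintro ⟨c, hc⟩
    exact ⟨⟨c, .of_semiconjBy_units hc⟩, fun g hg ↦ hg.isUnit_of_isConj ⟨c, hc⟩⟩
  · rintro ⟨⟨g, hg⟩, h_unit⟩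
    obtain ⟨u, rfl⟩ := h_unit g hg
    exact ⟨u, hg.1⟩

theorem stmt_14_general (a b : M) :
    ((∃ c : Mˣ, b = c * a * ↑c⁻¹) ↔
      (∃ g, IsFreeIntertwiner a b g) ∧ ∀ g, IsFreeIntertwiner a b g → IsUnit g) ∧
    ∀ g, IsFreeIntertwiner a b g → ∀ u : Mˣ, (u : M) = g → b = u * a * ↑u⁻¹ := by
  constructor
  · rw [← isConj_iff_exists_units_eq_conj]
    exact isConj_iff_exists_isFreeIntertwiner_and_forall_isUnit
  · rintro _ hu u rfl
    exact semiconjBy_units_iff_eq_conj.1 hu.1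

end Monoid

/-- Let `R` be a commutative ring, `n` a positive integer, and `A, B ∈ Mat_n(R)`.
Then `A` and `B` are similar over `R` if and only if
(a) the `C_R(B)`-module `C_R(A,B)` is free of rank 1 (i.e. it has a free generator `G`,
meaning every element of `C_R(A,B)` is uniquely of the form `D * G` with `D ∈ C_R(B)`), and
(b) every (equivalently, any) free generator `G` of `C_R(A,B)` over `C_R(B)` is invertible.
Furthermore, when this is the case, such a generator `G` satisfies `B = G * A * G⁻¹`,
i.e. `B * G = G * A` with `G` invertible. -/
theorem stmt_14 {R : Type*} [CommRing R] {n : ℕ} (hn : 0 < n)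
    (A B : Matrix (Fin n) (Fin n) R) :
    ((∃ C : (Matrix (Fin n) (Fin n) R)ˣ, B = (C : Matrix (Fin n) (Fin n) R) * A * (↑C⁻¹ : Matrix (Fin n) (Fin n) R)) ↔
      ((∃ G : Matrix (Fin n) (Fin n) R, G * A = B * G ∧
          (∀ X : Matrix (Fin n) (Fin n) R, X * A = B * X →
            ∃! D : Matrix (Fin n) (Fin n) R, D * B = B * D ∧ X = D * G)) ∧
        (∀ G : Matrix (Fin n) (Fin n) R, G * A = B * G →
          (∀ X : Matrix (Fin n) (Fin n) R, X * A = B * X →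
            ∃! D : Matrix (Fin n) (Fin n) R, D * B = B * D ∧ X = D * G) →
          IsUnit G))) ∧
    (∀ G : Matrix (Fin n) (Fin n) R, G * A = B * G →
      (∀ X : Matrix (Fin n) (Fin n) R, X * A = B * X →
        ∃! D : Matrix (Fin n) (Fin n) R, D * B = B * D ∧ X = D * G) →
      ∀ u : (Matrix (Fin n) (Fin n) R)ˣ, (u : Matrix (Fin n) (Fin n) R) = G →
        B = (u : Matrix (Fin n) (Fin n) R) * A * (↑u⁻¹ : Matrix (Fin n) (Fin n) R)) := by
  simpa only [IsFreeIntertwiner, SemiconjBy, Commute, and_imp] using stmt_14_general A B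
end

section
/- Let R be an integral domain, n a positive integer, and A, B ∈ Mat_n(R). Then A and B are similar over R if and only if: (a) the C_R(B)-module C_R(A, B) is free of rank 1, and (b) for every maximal ideal 𝔭 of R, the matrices A and B are similar over the localisation R_𝔭. Furthermore, when this is the case, any free generator C of C_R(A, B) over C_R(B) satisfies B = CAC⁻¹. -/
/-!
Invertibility of a generator `G` of `C_R(A, B)` is a local question, and generators are preserved
by localization, because denominators can be cleared. So it suffices to treat the case where `A`
and `B` are similar, say by a unit `C`: then `C = D * G` for some `D`, so `G` is invertible.
-/

section Monoid

variable {M : Type*} [Monoid M] {a b g : M}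

/-- `g` generates the intertwiners `C(a, b) = {x | x * a = b * x}` as a left module over the
centralizer of `b`. -/
def IsIntertwinerGenerator (g a b : M) : Prop :=
  SemiconjBy g a b ∧ ∀ x, SemiconjBy x a b → ∃ d, Commute d b ∧ x = d * g

/-- `g` is a free generator of the intertwiners `C(a, b) = {x | x * a = b * x}` as a left module
over the centralizer of `b`; freeness is encoded as uniqueness of coefficients. -/
def IsFreeIntertwinerGenerator (g a b : M) : Prop :=
  SemiconjBy g a b ∧ ∀ x, SemiconjBy x a b → ∃! d, Commute d b ∧ x = d * g

theorem IsFreeIntertwinerGenerator.isIntertwinerGenerator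
    (hg : IsFreeIntertwinerGenerator g a b) : IsIntertwinerGenerator g a b :=
  ⟨hg.1, fun x hx ↦ (hg.2 x hx).exists⟩

theorem eq_units_mul_mul_inv_iff_semiconjBy {u : Mˣ} :
    b = u * a * ↑u⁻¹ ↔ SemiconjBy (u : M) a b := by
  rw [Units.eq_mul_inv_iff_mul_eq, eq_comm, SemiconjBy]

theorem isFreeIntertwinerGenerator_units {u : Mˣ} (hu : SemiconjBy (u : M) a b) :
    IsFreeIntertwinerGenerator (u : M) a b := by
  refine ⟨hu, fun x hx ↦ ⟨x * ↑u⁻¹, ⟨hx.mul_left hu.units_inv_symm_left, ?_⟩, ?_⟩⟩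
  · rw [Units.inv_mul_cancel_right]
  · rintro d ⟨-, rfl⟩
    rw [Units.mul_inv_cancel_right]

theorem IsIntertwinerGenerator.isUnit_of_isConj [IsDedekindFiniteMonoid M]
    (hg : IsIntertwinerGenerator g a b) (hab : IsConj a b) : IsUnit g := by
  obtain ⟨c, hc⟩ := hab
  obtain ⟨d, -, hcd⟩ := hg.2 c hc
  exact isUnit_of_mul_isUnit_right (hcd ▸ c.isUnit)

end Monoid

section Localization

variable {R : Type*}

theorem isLocalizedModule_mapMatrix [CommSemiring R] (S : Submonoid R) {m n N N' : Type*}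
    [Finite m] [Finite n] [AddCommMonoid N] [Module R N] [AddCommMonoid N'] [Module R N']
    (f : N →ₗ[R] N') [IsLocalizedModule S f] :
    IsLocalizedModule S (f.mapMatrix : Matrix m n N →ₗ[R] Matrix m n N') :=
  IsLocalizedModule.pi S fun _ : m ↦ .pi fun j : n ↦ f ∘ₗ .proj j

theorem exists_mul_eq_mul_and_map_eq_smul [CommSemiring R] (S : Submonoid R) {R' : Type*}
    [CommSemiring R'] [Algebra R R'] [IsLocalization S R'] {m n : Type*} [Fintype m] [Fintype n]
    {A : Matrix n n R} {B : Matrix m m R} {Y : Matrix m n R'}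
    (hY : Y * A.map (algebraMap R R') = B.map (algebraMap R R') * Y) :
    ∃ (s : S) (X : Matrix m n R), X * A = B * X ∧ X.map (algebraMap R R') = s • Y := by
  let f : Matrix m n R →ₗ[R] Matrix m n R' := (Algebra.linearMap R R').mapMatrix
  have : IsLocalizedModule S f := isLocalizedModule_mapMatrix S _
  obtain ⟨⟨X, s⟩, hX : s • Y = X.map (algebraMap R R')⟩ := IsLocalizedModule.surj S f Y
  have hXAB : f (X * A) = f (B * X) := by
    change (X * A).map (algebraMap R R') = (B * X).map (algebraMap R R')
    rw [Matrix.map_mul, Matrix.map_mul, ← hX, Matrix.smul_mul, Matrix.mul_smul, hY]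
  obtain ⟨t, ht⟩ := IsLocalizedModule.exists_of_eq (S := S) hXAB
  refine ⟨t * s, t • X, ?_, ?_⟩
  · rw [Matrix.smul_mul, Matrix.mul_smul, ht]
  · calc
      f (t • X) = t • f X := f.map_smul_of_tower t X
      _ = (t * s) • Y := by rw [mul_smul, hX]; rfl

theorem isUnit_of_forall_isUnit_localization [CommRing R] {r : R}
    (hr : ∀ (p : Ideal R) [p.IsMaximal], IsUnit (algebraMap R (Localization.AtPrime p) r)) :
    IsUnit r := by
  by_contra hr'
  obtain ⟨p, _, hrp⟩ := exists_max_ideal_of_mem_nonunits hr'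
  exact (IsLocalization.AtPrime.isUnit_to_map_iff _ p r).1 (hr p) hrp

variable {n : Type*} [Fintype n] [DecidableEq n]

theorem IsIntertwinerGenerator.map_algebraMap [CommSemiring R] (S : Submonoid R) (R' : Type*)
    [CommSemiring R'] [Algebra R R'] [IsLocalization S R'] {A B G : Matrix n n R}
    (hG : IsIntertwinerGenerator G A B) :
    IsIntertwinerGenerator (G.map (algebraMap R R')) (A.map (algebraMap R R'))
      (B.map (algebraMap R R')) := by
  let φ : Matrix n n R →+* Matrix n n R' := (algebraMap R R').mapMatrix
  refine ⟨hG.1.map φ, fun Y hY ↦ ?_⟩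
  obtain ⟨s, X, hX, hXY⟩ := exists_mul_eq_mul_and_map_eq_smul S hY
  obtain ⟨D, hD, rfl⟩ := hG.2 X hX
  refine ⟨IsLocalization.mk' R' 1 s • φ D, (hD.map φ).smul_left _, ?_⟩
  calc
    Y = IsLocalization.mk' R' 1 s • s • Y := by
      rw [Submonoid.smul_def, ← algebraMap_smul R' (s : R) Y, smul_smul, IsLocalization.mk'_spec,
        map_one, one_smul]
    _ = IsLocalization.mk' R' 1 s • φ (D * G) := by rw [← hXY]; rfl
    _ = IsLocalization.mk' R' 1 s • φ D * φ G := by rw [map_mul, smul_mul_assoc]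

variable [CommRing R] {A B G : Matrix n n R}

theorem matrix_isUnit_of_forall_isUnit_localization
    (hG : ∀ (p : Ideal R) [p.IsMaximal], IsUnit (G.map (algebraMap R (Localization.AtPrime p)))) :
    IsUnit G := by
  rw [Matrix.isUnit_iff_isUnit_det]
  refine isUnit_of_forall_isUnit_localization fun p _ ↦ ?_
  rw [RingHom.map_det]
  exact (Matrix.isUnit_iff_isUnit_det _).1 (hG p)

/-- `A` and `B` are locally similar: similar over the localization of `R` at each maximal ideal. -/
def IsLocallyConj (A B : Matrix n n R) : Prop :=
  ∀ (p : Ideal R) [p.IsMaximal], IsConj (A.map (algebraMap R (Localization.AtPrime p)))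
    (B.map (algebraMap R (Localization.AtPrime p)))

theorem isLocallyConj_of_isConj (hAB : IsConj A B) : IsLocallyConj A B := fun p _ ↦
  (algebraMap R (Localization.AtPrime p)).mapMatrix.toMonoidHom.map_isConj hAB

theorem IsIntertwinerGenerator.isUnit_of_isLocallyConj (hG : IsIntertwinerGenerator G A B)
    (hAB : IsLocallyConj A B) : IsUnit G :=
  matrix_isUnit_of_forall_isUnit_localization fun p _ ↦
    (hG.map_algebraMap p.primeCompl (Localization.AtPrime p)).isUnit_of_isConj (hAB p)

end Localization

theorem stmt_15_general {R : Type*} [CommRing R] {n : Type*} [Fintype n] [DecidableEq n]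
    (A B : Matrix n n R) :
    [IsConj A B,
      (∃ G, IsFreeIntertwinerGenerator G A B) ∧ IsLocallyConj A B,
      (∃ G, IsIntertwinerGenerator G A B) ∧ IsLocallyConj A B].TFAE ∧
    ∀ G, IsIntertwinerGenerator G A B → IsConj A B →
      IsUnit G ∧ ∀ u : (Matrix n n R)ˣ, (u : Matrix n n R) = G →
        B = u * A * (↑u⁻¹ : Matrix n n R) := by
  refine ⟨?_, fun G hG hAB ↦ ⟨hG.isUnit_of_isConj hAB, ?_⟩⟩
  · tfae_have 1 → 2 := by
      rintro ⟨u, hu⟩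
      exact ⟨⟨u, isFreeIntertwinerGenerator_units hu⟩, isLocallyConj_of_isConj ⟨u, hu⟩⟩
    tfae_have 2 → 3 := And.imp_left <| Exists.imp fun _ hG ↦ hG.isIntertwinerGenerator
    tfae_have 3 → 1 := by
      rintro ⟨⟨G, hG⟩, hloc⟩
      obtain ⟨u, rfl⟩ := hG.isUnit_of_isLocallyConj hloc
      exact ⟨u, hG.1⟩
    tfae_finish
  · rintro u rfl
    exact eq_units_mul_mul_inv_iff_semiconjBy.2 hG.1

/-- Let `R` be an integral domain, `n` a positive integer, and `A, B ∈ Mat_n(R)`.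
Then `A` and `B` are similar over `R` if and only if
(a) the `C_R(B)`-module `C_R(A,B)` is free of rank 1 (it has a free generator `G`:
every element of `C_R(A,B)` is uniquely of the form `D * G` with `D ∈ C_R(B)`), and
(b) for every maximal ideal `𝔭` of `R`, the matrices `A` and `B` are similar over the
localisation `R_𝔭`.  Furthermore, when this is the case, any free generator `G` of
`C_R(A,B)` over `C_R(B)` is invertible and satisfies `B = G * A * G⁻¹`. -/
theorem stmt_15 {R : Type*} [CommRing R] [IsDomain R] {n : ℕ} (hn : 0 < n)
    (A B : Matrix (Fin n) (Fin n) R) :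
    ((∃ C : (Matrix (Fin n) (Fin n) R)ˣ,
        B = (C : Matrix (Fin n) (Fin n) R) * A * (↑C⁻¹ : Matrix (Fin n) (Fin n) R)) ↔
      ((∃ G : Matrix (Fin n) (Fin n) R, G * A = B * G ∧
          (∀ X : Matrix (Fin n) (Fin n) R, X * A = B * X →
            ∃! D : Matrix (Fin n) (Fin n) R, D * B = B * D ∧ X = D * G)) ∧
        (∀ (𝔭 : Ideal R) [𝔭.IsMaximal],
          ∃ C : (Matrix (Fin n) (Fin n) (Localization.AtPrime 𝔭))ˣ,
            B.map (algebraMap R (Localization.AtPrime 𝔭)) =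
              (C : Matrix (Fin n) (Fin n) (Localization.AtPrime 𝔭)) *
                A.map (algebraMap R (Localization.AtPrime 𝔭)) *
                  (↑C⁻¹ : Matrix (Fin n) (Fin n) (Localization.AtPrime 𝔭))))) ∧
    (∀ G : Matrix (Fin n) (Fin n) R, G * A = B * G →
      (∀ X : Matrix (Fin n) (Fin n) R, X * A = B * X →
        ∃! D : Matrix (Fin n) (Fin n) R, D * B = B * D ∧ X = D * G) →
      (∃ C : (Matrix (Fin n) (Fin n) R)ˣ,
        B = (C : Matrix (Fin n) (Fin n) R) * A * (↑C⁻¹ : Matrix (Fin n) (Fin n) R)) →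
      IsUnit G ∧
        ∀ u : (Matrix (Fin n) (Fin n) R)ˣ, (u : Matrix (Fin n) (Fin n) R) = G →
          B = (u : Matrix (Fin n) (Fin n) R) * A * (↑u⁻¹ : Matrix (Fin n) (Fin n) R)) := by
  obtain ⟨htfae, hgen⟩ := stmt_15_general A B
  simp only [eq_units_mul_mul_inv_iff_semiconjBy] at hgen ⊢
  exact ⟨htfae.out 0 1, fun G hG hfree ↦
    hgen G (IsFreeIntertwinerGenerator.isIntertwinerGenerator ⟨hG, hfree⟩)⟩
end

section
/- Let F be a field, n a positive integer, and A ∈ Mat_n(F). Then: (a) the minimal polynomial of A is squarefree if and only if the F-algebra C_F(A) = { X ∈ Mat_n(F) : XA = AX } is semisimple; (b) the characteristic polynomial of A is squarefree if and only if C_F(A) is isomorphic to a finite product of fields; (c) if A is nilpotent, then C_F(A)/J(C_F(A)) is isomorphic to ∏_{j=1}^m Mat_{d_j}(F) for some positive integers m, d_1, …, d_m, where J denotes the Jacobson radical. -/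
/-!
View `V = F ^ n` as an `F[X]`-module with `X` acting as `A`, so that the centraliser of `A` is
`End_{F[X]} V`. If this ring is semisimple, it has no nonzero central nilpotent element, hence the
annihilator `(minpoly A)` of `V` is a radical ideal; conversely a squarefree minimal polynomial
makes `V`, and so its endomorphism ring, semisimple. For semisimple `V` the endomorphisms commute
iff `V` is cyclic, that is, iff `minpoly A = charpoly A`; this holds whenever `charpoly A` is
squarefree, because `charpoly A` divides a power of `minpoly A`.

For nilpotent `A`, `V ≅ ∏ i, F[X] / (X ^ e i)`. Reducing an endomorphism modulo `X` gives a
matrix over `F`, and the matrices which occur are exactly those that are block triangular with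
respect to `e`. An endomorphism vanishing modulo `X` is nilpotent, and so is a block triangular
matrix with zero diagonal blocks. Hence the surjection onto the product of the diagonal blocks has
a nil kernel, which must be the Jacobson radical because the target is semisimple.
-/

open Polynomial Module Matrix

section NilKernel

theorem mem_jacobson_bot_of_forall_isNilpotent_mul {R : Type*} [Ring R] {x : R}
    (h : ∀ y, IsNilpotent (y * x)) : x ∈ Ideal.jacobson (⊥ : Ideal R) := by
  rw [Ideal.mem_jacobson_iff]
  intro y
  obtain ⟨u, hu⟩ := (h y).isUnit_one_add
  have hinv : (↑u⁻¹ : R) * (1 + y * x) = 1 := by rw [← hu, Units.inv_mul]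
  refine ⟨↑u⁻¹, ?_⟩
  rw [Ideal.mem_bot, mul_assoc, ← hinv]
  noncomm_ring

theorem jacobson_bot_eq_bot_of_isSemisimpleRing {R : Type*} [Ring R] [IsSemisimpleRing R] :
    Ideal.jacobson (⊥ : Ideal R) = ⊥ := by
  rw [Ideal.jacobson_bot, IsSemisimpleRing.jacobson_eq_bot]

theorem eq_zero_of_isNilpotent_of_forall_commute {R : Type*} [Ring R] [IsSemisimpleRing R] {x : R}
    (hx : IsNilpotent x) (hcomm : ∀ y, Commute y x) : x = 0 := by
  have hmem : x ∈ Ideal.jacobson (⊥ : Ideal R) :=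
    mem_jacobson_bot_of_forall_isNilpotent_mul fun y ↦ (hcomm y).isNilpotent_mul_left hx
  rwa [jacobson_bot_eq_bot_of_isSemisimpleRing, Ideal.mem_bot] at hmem

theorem ker_eq_jacobson_bot {R S : Type*} [Ring R] [Ring S] [IsSemisimpleRing S] {φ : R →+* S}
    (hsurj : Function.Surjective φ) (hnil : ∀ x ∈ RingHom.ker φ, IsNilpotent x) :
    RingHom.ker φ = Ideal.jacobson (⊥ : Ideal R) := by
  refine le_antisymm (fun x hx ↦ ?_) ?_
  · exact mem_jacobson_bot_of_forall_isNilpotent_mul fun y ↦ hnil _ (Ideal.mul_mem_left _ y hx)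
  · have : RingHomSurjective φ := ⟨hsurj⟩
    have hle := Ring.le_comap_jacobson (f := φ)
    rwa [← Ideal.jacobson_bot, ← Ideal.jacobson_bot,
      jacobson_bot_eq_bot_of_isSemisimpleRing (R := S)] at hle

theorem isNilpotent_of_mem_ker_comp {R S T : Type*} [Semiring R] [Semiring S] [Semiring T]
    {g : S →+* T} {f : R →+* S} (hg : ∀ y ∈ RingHom.ker g, IsNilpotent y)
    (hf : ∀ x ∈ RingHom.ker f, IsNilpotent x) : ∀ x ∈ RingHom.ker (g.comp f), IsNilpotent x := by
  intro x hx
  obtain ⟨k, hk⟩ := hg (f x) hx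
  exact (hf (x ^ k) (by rw [RingHom.mem_ker, map_pow, hk])).of_pow

end NilKernel

theorem exists_ringEquiv_pi_field_iff {R : Type u} [Ring R] :
    (∃ (m : ℕ) (K : Fin m → Type u) (_ : ∀ i, Field (K i)), Nonempty (R ≃+* ∀ i, K i)) ↔
      IsSemisimpleRing R ∧ ∀ x y : R, Commute x y := by
  constructor
  · rintro ⟨m, K, _, ⟨e⟩⟩
    exact ⟨e.symm.isSemisimpleRing, fun x y ↦ e.injective (by rw [map_mul, map_mul, mul_comm])⟩
  · rintro ⟨_, hcomm⟩
    let _ : CommRing R := { ‹Ring R› with mul_comm := fun x y ↦ (hcomm x y).eq }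
    let index := Finite.equivFin (MaximalSpectrum R)
    exact ⟨_, fun i ↦ R ⧸ (index.symm i).asIdeal,
      fun i ↦ Ideal.Quotient.field (index.symm i).asIdeal,
      ⟨(IsArtinianRing.equivPi R).toRingEquiv.trans (RingEquiv.piCongrLeft' _ index)⟩⟩

section CommutativeEnd

variable {R M : Type*} [CommRing R] [AddCommGroup M] [Module R M]

theorem isRadical_annihilator_of_isSemisimpleRing_end [IsSemisimpleRing (Module.End R M)] :
    (annihilator R M).IsRadical := by
  rintro r ⟨k, hk⟩
  have hnil : IsNilpotent (algebraMap R (Module.End R M) r) :=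
    ⟨k, LinearMap.ext fun v ↦ by
      rw [← map_pow, algebraMap_end_apply, mem_annihilator.1 hk v, LinearMap.zero_apply]⟩
  have hzero := eq_zero_of_isNilpotent_of_forall_commute hnil
    fun f ↦ Algebra.commute_algebraMap_right r f
  exact mem_annihilator.2 fun v ↦ LinearMap.congr_fun hzero v

theorem commute_end_of_span_singleton_eq_top {v : M} (hv : R ∙ v = ⊤) (f g : Module.End R M) :
    Commute f g := by
  have hgen : ∀ w, ∃ r : R, r • v = w := fun w ↦
    Submodule.mem_span_singleton.1 (hv ▸ Submodule.mem_top)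
  obtain ⟨a, ha⟩ := hgen (f v)
  obtain ⟨b, hb⟩ := hgen (g v)
  ext w
  obtain ⟨r, rfl⟩ := hgen w
  simp only [Module.End.mul_apply, map_smul, ← ha, ← hb, smul_comm a b]

theorem ker_toSpanSingleton_eq_annihilator_of_span_eq_top {v : M} (hv : R ∙ v = ⊤) :
    LinearMap.ker (LinearMap.toSpanSingleton R M v) = annihilator R M := by
  ext r
  rw [← Submodule.annihilator_top, ← hv, Submodule.mem_annihilator_span_singleton]
  rfl

theorem exists_end_apply_eq_of_ker_toSpanSingleton_eq_annihilator [IsSemisimpleModule R M] {v : M}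
    (hv : LinearMap.ker (LinearMap.toSpanSingleton R M v) = annihilator R M) (w : M) :
    ∃ f : Module.End R M, f v = w := by
  have hker : LinearMap.ker (LinearMap.toSpanSingleton R M v) ≤
      LinearMap.ker (LinearMap.toSpanSingleton R M w) :=
    hv.trans_le fun r hr ↦ mem_annihilator.1 hr w
  obtain ⟨f, hf⟩ := IsSemisimpleModule.extension_property (Submodule.liftQ _ _ le_rfl)
    (LinearMap.ker_eq_bot.1 (Submodule.ker_liftQ_eq_bot _ _ _ le_rfl)) (Submodule.liftQ _ _ hker)
  refine ⟨f, ?_⟩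
  have hone := LinearMap.congr_fun hf (Submodule.Quotient.mk 1)
  rwa [LinearMap.comp_apply, Submodule.liftQ_apply, Submodule.liftQ_apply,
    LinearMap.toSpanSingleton_apply_one, LinearMap.toSpanSingleton_apply_one] at hone

theorem span_singleton_eq_top_of_forall_commute [IsSemisimpleModule R M] {v : M}
    (hv : LinearMap.ker (LinearMap.toSpanSingleton R M v) = annihilator R M)
    (hcomm : ∀ f g : Module.End R M, Commute f g) : R ∙ v = ⊤ := by
  obtain ⟨W, hW⟩ := exists_isCompl (R ∙ v)
  let π : Module.End R M := Submodule.projection (R ∙ v) W hW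
  have hπv : π v = v :=
    Submodule.projection_apply_left hW ⟨v, Submodule.mem_span_singleton_self v⟩
  refine Submodule.eq_top_iff'.2 fun w ↦ ?_
  obtain ⟨f, rfl⟩ := exists_end_apply_eq_of_ker_toSpanSingleton_eq_annihilator hv w
  have hfix : π (f v) = f v := by
    simpa only [Module.End.mul_apply, hπv] using LinearMap.congr_fun (hcomm π f) v
  rw [← hfix]
  exact Submodule.projection_apply_mem hW _

theorem forall_commute_end_iff_exists_span_singleton_eq_top [IsDomain R] [IsPrincipalIdealRing R]
    [Module.Finite R M] [IsSemisimpleModule R M] :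
    (∀ f g : Module.End R M, Commute f g) ↔ ∃ v : M, R ∙ v = ⊤ := by
  refine ⟨fun hcomm ↦ ?_, fun ⟨v, hv⟩ ↦ commute_end_of_span_singleton_eq_top hv⟩
  obtain ⟨v, hv⟩ := exists_ker_toSpanSingleton_eq_annihilator R M
  exact ⟨v, span_singleton_eq_top_of_forall_commute hv hcomm⟩

end CommutativeEnd

section Charpoly

theorem sub_dvd_aeval_sub_aeval_of_commute {R A : Type*} [CommRing R] [Ring A] [Algebra R A]
    {x y : A} (h : Commute x y) (p : R[X]) : x - y ∣ aeval x p - aeval y p := by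
  induction p using Polynomial.induction_on' with
  | add p q hp hq =>
    rw [map_add, map_add, add_sub_add_comm]
    exact dvd_add hp hq
  | monomial k r =>
    obtain ⟨c, hc⟩ := h.sub_dvd_pow_sub_pow k
    refine ⟨r • c, ?_⟩
    rw [aeval_monomial, aeval_monomial, ← mul_sub, hc, ← Algebra.smul_def, mul_smul_comm]

-- Over `R[X]`, the matrix `X - A` divides `p(X) - p(A) = p(X)`; take determinants.
theorem charpoly_dvd_pow_card {R n : Type*} [CommRing R] [Fintype n] [DecidableEq n]
    {A : Matrix n n R} {p : R[X]} (hp : aeval A p = 0) : A.charpoly ∣ p ^ Fintype.card n := by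
  have hX : aeval (Matrix.scalar n (X : R[X])) p = Matrix.scalar n p := by
    simpa only [Matrix.scalarAlgHom_apply, aeval_X_left_apply] using
      aeval_algHom_apply (Matrix.scalarAlgHom n R (α := R[X])) X p
  have hA : aeval (C.mapMatrix A) p = 0 := by
    rw [← map_zero C.mapMatrix, ← hp]
    exact aeval_algHom_apply (CAlgHom (A := R)).mapMatrix A p
  have hdvd : A.charmatrix ∣ Matrix.scalar n p := by
    rw [← sub_zero (Matrix.scalar n p), ← hX, ← hA]
    exact sub_dvd_aeval_sub_aeval_of_commute (Matrix.scalar_commute _ (Commute.all _) _) p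
  simpa only [Matrix.charpoly, Matrix.coe_detMonoidHom, Matrix.scalar_apply, Matrix.det_diagonal,
    Finset.prod_const, Finset.card_univ] using map_dvd Matrix.detMonoidHom hdvd

end Charpoly

section Centralizer

theorem map_centralizer_singleton {R A B : Type*} [CommSemiring R] [Semiring A] [Semiring B]
    [Algebra R A] [Algebra R B] (e : A ≃ₐ[R] B) (a : A) :
    (Subalgebra.centralizer R {a}).map (e : A →ₐ[R] B) = Subalgebra.centralizer R {e a} := by
  ext b
  obtain ⟨x, rfl⟩ := e.surjective b
  simp only [Subalgebra.mem_map, Subalgebra.mem_centralizer_iff, Set.mem_singleton_iff, forall_eq,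
    AlgEquiv.coe_toAlgHom, EmbeddingLike.apply_eq_iff_eq, exists_eq_right, ← map_mul]

/-- Linear maps commuting with `T` are the `R[X]`-linear maps of `V` with `X` acting as `T`. -/
noncomputable def centralizerEquivEndAEval {R V : Type*} [CommRing R] [AddCommGroup V] [Module R V]
    (T : Module.End R V) :
    Subalgebra.centralizer R {T} ≃+* Module.End R[X] (AEval' T) where
  toFun f := LinearMap.ofAEval T ((AEval'.of T).toLinearMap ∘ₗ f.1) fun v ↦ by
    have hf : T (f.1 v) = f.1 (T v) :=
      LinearMap.congr_fun ((Subalgebra.mem_centralizer_iff R).1 f.2 T rfl) v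
    simp only [LinearMap.comp_apply, LinearEquiv.coe_coe, AEval'.X_smul_of, hf, End.smul_def]
  invFun g := ⟨(AEval'.of T).symm.toLinearMap ∘ₗ g.restrictScalars R ∘ₗ
      (AEval'.of T).toLinearMap, by
    rw [Subalgebra.mem_centralizer_iff]
    rintro _ rfl
    ext v
    simp only [End.mul_apply, LinearMap.comp_apply, LinearEquiv.coe_coe,
      LinearMap.restrictScalars_apply]
    rw [← AEval'.X_smul_of, map_smul, AEval'.of_symm_X_smul]⟩
  left_inv f := by ext; simp [LinearMap.ofAEval]
  right_inv g := by ext; simp [LinearMap.ofAEval]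
  map_mul' f g := by ext; simp [LinearMap.ofAEval]
  map_add' f g := by ext; simp [LinearMap.ofAEval]

end Centralizer

section AEval

variable {F V : Type*} [Field F] [AddCommGroup V] [Module F V] {T : Module.End F V}

theorem annihilator_aeval'_eq_span_minpoly :
    annihilator F[X] (AEval' T) = Ideal.span {minpoly F T} :=
  (AEval.annihilator_eq_ker_aeval (M := V) T).trans (minpoly.ker_aeval_eq_span_minpoly F T)

theorem isSemisimpleModule_aeval'_of_squarefree_minpoly (h : Squarefree (minpoly F T)) :
    IsSemisimpleModule F[X] (AEval' T) :=
  Module.End.isSemisimple_of_squarefree_aeval_eq_zero h (minpoly.aeval F T)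

theorem finrank_span_singleton_eq_natDegree_minpoly {v : AEval' T}
    (hv : LinearMap.ker (LinearMap.toSpanSingleton F[X] _ v) = annihilator F[X] (AEval' T)) :
    finrank F (F[X] ∙ v) = (minpoly F T).natDegree := by
  rw [annihilator_aeval'_eq_span_minpoly] at hv
  rw [← finrank_quotient_span_eq_natDegree, ← hv, ← LinearMap.range_toSpanSingleton]
  exact ((LinearMap.quotKerEquivRange _).restrictScalars F).finrank_eq.symm

variable [FiniteDimensional F V]

theorem squarefree_minpoly_iff_isSemisimpleRing_end :
    Squarefree (minpoly F T) ↔ IsSemisimpleRing (Module.End F[X] (AEval' T)) := by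
  constructor
  · intro h
    have := isSemisimpleModule_aeval'_of_squarefree_minpoly h
    exact IsSemisimpleRing.moduleEnd ..
  · intro _
    rw [← isRadical_iff_squarefree_of_ne_zero (minpoly.ne_zero_of_finite F T),
      isRadical_iff_span_singleton, ← annihilator_aeval'_eq_span_minpoly]
    exact isRadical_annihilator_of_isSemisimpleRing_end

theorem minpoly_eq_charpoly_iff_natDegree_eq_finrank :
    minpoly F T = T.charpoly ↔ (minpoly F T).natDegree = finrank F V := by
  refine ⟨fun h ↦ by rw [h, T.charpoly_natDegree], fun h ↦ ?_⟩
  exact (eq_of_monic_of_dvd_of_natDegree_le (minpoly.monic (Algebra.IsIntegral.isIntegral T))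
    T.charpoly_monic T.minpoly_dvd_charpoly (by rw [T.charpoly_natDegree, h])).symm

theorem exists_span_singleton_eq_top_iff_minpoly_eq_charpoly :
    (∃ v : AEval' T, F[X] ∙ v = ⊤) ↔ minpoly F T = T.charpoly := by
  rw [minpoly_eq_charpoly_iff_natDegree_eq_finrank, (AEval'.of T).finrank_eq]
  constructor
  · rintro ⟨v, hv⟩
    rw [← finrank_span_singleton_eq_natDegree_minpoly
      (ker_toSpanSingleton_eq_annihilator_of_span_eq_top hv), hv]
    exact finrank_top F (AEval' T)
  · intro h
    obtain ⟨v, hv⟩ := exists_ker_toSpanSingleton_eq_annihilator F[X] (AEval' T)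
    refine ⟨v, (Submodule.restrictScalars_eq_top_iff F F[X] _).1 ?_⟩
    exact Submodule.eq_top_of_finrank_eq ((finrank_span_singleton_eq_natDegree_minpoly hv).trans h)

theorem squarefree_charpoly_iff_minpoly :
    Squarefree T.charpoly ↔ Squarefree (minpoly F T) ∧ minpoly F T = T.charpoly := by
  refine ⟨fun h ↦ ?_, fun ⟨h, heq⟩ ↦ heq ▸ h⟩
  have hpow : T.charpoly ∣ minpoly F T ^ finrank F V := by
    let b := finBasis F V
    simpa only [T.charpoly_toMatrix, LinearMap.minpoly_toMatrix, Fintype.card_fin] using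
      charpoly_dvd_pow_card (minpoly.aeval F (LinearMap.toMatrix b b T))
  refine ⟨h.squarefree_of_dvd T.minpoly_dvd_charpoly, ?_⟩
  exact eq_of_monic_of_associated (minpoly.monic (Algebra.IsIntegral.isIntegral T))
    T.charpoly_monic (associated_of_dvd_dvd T.minpoly_dvd_charpoly (h.isRadical _ _ hpow))

theorem squarefree_charpoly_iff_isSemisimpleRing_end_and_commute :
    Squarefree T.charpoly ↔ IsSemisimpleRing (Module.End F[X] (AEval' T)) ∧
      ∀ f g : Module.End F[X] (AEval' T), Commute f g := by
  rw [squarefree_charpoly_iff_minpoly, ← exists_span_singleton_eq_top_iff_minpoly_eq_charpoly,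
    ← squarefree_minpoly_iff_isSemisimpleRing_end]
  refine and_congr_right fun h ↦ ?_
  have := isSemisimpleModule_aeval'_of_squarefree_minpoly h
  exact forall_commute_end_iff_exists_span_singleton_eq_top.symm

end AEval

section ResidueMatrix

theorem isNilpotent_of_range_le_smul_top {R M : Type*} [CommRing R] [AddCommGroup M] [Module R M]
    {f : Module.End R M} {J : Ideal R} (hf : LinearMap.range f ≤ J • ⊤) {k : ℕ}
    (hk : J ^ k ≤ annihilator R M) : IsNilpotent f := by
  have hrange : ∀ j, LinearMap.range (f ^ j) ≤ J ^ j • ⊤ := by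
    intro j
    induction j with
    | zero => simp only [pow_zero, Ideal.one_eq_top, Submodule.top_smul, le_top]
    | succ j ih =>
      rw [pow_succ', End.mul_eq_comp, LinearMap.range_comp, pow_succ, Submodule.mul_smul]
      refine (Submodule.map_mono ih).trans ?_
      rw [Submodule.map_smul'', Submodule.map_top]
      exact smul_mono_right _ hf
  refine ⟨k, LinearMap.range_eq_bot.1 (le_bot_iff.1 ((hrange k).trans ?_))⟩
  exact (Submodule.le_annihilator_iff.1 (hk.trans_eq Submodule.annihilator_top.symm)).le

variable {R κ ι : Type*} [CommRing R] [CommRing κ] {π : R →+* κ} {I : ι → Ideal R}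

/-- The reduction of `∏ i, R ⧸ I i` modulo the kernel of `π : R →+* κ`, as a semilinear map. -/
def residueVector (hI : ∀ i, I i ≤ RingHom.ker π) : (∀ i, R ⧸ I i) →ₛₗ[π] (ι → κ) where
  toFun y i := Ideal.Quotient.lift (I i) π (hI i) (y i)
  map_add' y z := funext fun i ↦ map_add _ (y i) (z i)
  map_smul' r y := funext fun i ↦ by
    rw [Pi.smul_apply, Algebra.smul_def, map_mul]
    rfl

section StandardBasis

variable [DecidableEq ι]

theorem residueVector_single_one (hI : ∀ i, I i ≤ RingHom.ker π) (l : ι) :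
    residueVector hI (Pi.single l 1) = Pi.single l 1 :=
  funext fun i ↦ (Pi.apply_single (fun i ↦ Ideal.Quotient.lift (I i) π (hI i))
    (fun _ ↦ map_zero _) l 1 i).trans (by rw [map_one])

theorem exists_end_apply_single_one_eq_mk [Finite ι] {r : Matrix ι ι R}
    (hr : ∀ i l, ∀ a ∈ I l, a * r i l ∈ I i) :
    ∃ f : Module.End R (∀ i, R ⧸ I i),
      ∀ i l, f (Pi.single l 1) i = Ideal.Quotient.mk (I i) (r i l) := by
  cases nonempty_fintype ι
  let component (i l : ι) : (R ⧸ I l) →ₗ[R] R ⧸ I i :=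
    Submodule.liftQ (I l)
      (LinearMap.toSpanSingleton R (R ⧸ I i) (Ideal.Quotient.mk (I i) (r i l)))
      fun a ha ↦ Ideal.Quotient.eq_zero_iff_mem.2 (hr i l a ha)
  refine ⟨LinearMap.pi fun i ↦ LinearMap.lsum R _ R (component i), fun i l ↦ ?_⟩
  rw [LinearMap.pi_apply, LinearMap.lsum_piSingle]
  exact one_smul R (Ideal.Quotient.mk (I i) (r i l))

variable [Fintype ι]

theorem sum_smul_single_one_eq_mk (r : ι → R) :
    ∑ l, r l • (Pi.single l 1 : ∀ i, R ⧸ I i) = fun i ↦ Ideal.Quotient.mk (I i) (r i) := by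
  simp_rw [← Pi.single_smul, Finset.univ_sum_single, Algebra.smul_def, mul_one]
  rfl

theorem exists_eq_sum_smul_single_one (y : ∀ i, R ⧸ I i) :
    ∃ r : ι → R, y = ∑ l, r l • Pi.single l 1 := by
  choose r hr using fun i ↦ Ideal.Quotient.mk_surjective (y i)
  exact ⟨r, (funext fun i ↦ (hr i).symm).trans (sum_smul_single_one_eq_mk r).symm⟩

theorem residueVector_sum_smul_single_one (hI : ∀ i, I i ≤ RingHom.ker π) (r : ι → R) :
    residueVector hI (∑ l, r l • Pi.single l 1) = fun i ↦ π (r i) := by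
  rw [sum_smul_single_one_eq_mk]
  rfl

end StandardBasis

theorem mem_ker_smul_top_of_residueVector_eq_zero [Finite ι] (hI : ∀ i, I i ≤ RingHom.ker π)
    {y : ∀ i, R ⧸ I i} (hy : residueVector hI y = 0) :
    y ∈ (RingHom.ker π • ⊤ : Submodule R (∀ i, R ⧸ I i)) := by
  classical
  cases nonempty_fintype ι
  obtain ⟨r, rfl⟩ := exists_eq_sum_smul_single_one y
  rw [residueVector_sum_smul_single_one] at hy
  exact Submodule.sum_mem _ fun l _ ↦
    Submodule.smul_mem_smul (RingHom.mem_ker.2 (congrFun hy l)) Submodule.mem_top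

variable [Fintype ι] [DecidableEq ι]

theorem residueVector_end_apply (hI : ∀ i, I i ≤ RingHom.ker π) (f : Module.End R (∀ i, R ⧸ I i))
    (y : ∀ i, R ⧸ I i) :
    residueVector hI (f y) =
      Matrix.of (fun i l ↦ residueVector hI (f (Pi.single l 1)) i) *ᵥ residueVector hI y := by
  obtain ⟨r, rfl⟩ := exists_eq_sum_smul_single_one y
  ext i
  rw [residueVector_sum_smul_single_one]
  simp only [map_sum, map_smul, map_smulₛₗ, Finset.sum_apply, Pi.smul_apply, smul_eq_mul,
    Matrix.mulVec, dotProduct, Matrix.of_apply, mul_comm (π _)]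

/-- The matrix of the map that an endomorphism of `∏ i, R ⧸ I i` induces on residue vectors. -/
def residueMatrix (hI : ∀ i, I i ≤ RingHom.ker π) :
    Module.End R (∀ i, R ⧸ I i) →+* Matrix ι ι κ where
  toFun f := .of fun i l ↦ residueVector hI (f (Pi.single l 1)) i
  map_one' := by
    ext i l
    rw [Matrix.of_apply, End.one_apply, residueVector_single_one,
      Matrix.one_eq_pi_single, Pi.single_comm]
  map_mul' f g := by
    ext i l
    rw [Matrix.of_apply, End.mul_apply, residueVector_end_apply]
    rfl
  map_zero' := by
    ext i l
    rw [Matrix.of_apply, LinearMap.zero_apply, map_zero]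
    rfl
  map_add' f g := by
    ext i l
    rw [Matrix.of_apply, LinearMap.add_apply, map_add]
    rfl

theorem residueMatrix_apply_of_eq_mk (hI : ∀ i, I i ≤ RingHom.ker π)
    {f : Module.End R (∀ i, R ⧸ I i)} {i l : ι} {r : R}
    (hr : f (Pi.single l 1) i = Ideal.Quotient.mk (I i) r) : residueMatrix hI f i l = π r :=
  (congrArg (Ideal.Quotient.lift (I i) π (hI i)) hr).trans (Ideal.Quotient.lift_mk (I i) π (hI i))

theorem isNilpotent_of_mem_ker_residueMatrix (hI : ∀ i, I i ≤ RingHom.ker π) {k : ℕ}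
    (hk : ∀ i, RingHom.ker π ^ k ≤ I i) :
    ∀ f ∈ RingHom.ker (residueMatrix hI), IsNilpotent f := by
  intro f hf
  refine isNilpotent_of_range_le_smul_top (J := RingHom.ker π) (k := k) ?_ fun r hr ↦ ?_
  · rintro _ ⟨y, rfl⟩
    refine mem_ker_smul_top_of_residueVector_eq_zero hI ?_
    rw [residueVector_end_apply]
    exact (congrArg (· *ᵥ residueVector hI y) hf).trans (Matrix.zero_mulVec _)
  · refine mem_annihilator.2 fun y ↦ funext fun i ↦ ?_
    rw [Pi.smul_apply, Algebra.smul_def, Ideal.Quotient.algebraMap_eq,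
      Ideal.Quotient.eq_zero_iff_mem.2 (hk i hr), zero_mul, Pi.zero_apply]

end ResidueMatrix

section PrimePower

variable {R κ ι : Type*} [CommRing R] [CommRing κ] {π : R →+* κ} {p : R} {e : ι → ℕ}

theorem span_pow_le_ker (hker : RingHom.ker π = Ideal.span {p}) (he : ∀ i, e i ≠ 0) (i : ι) :
    Ideal.span {p ^ e i} ≤ RingHom.ker π := by
  rw [hker, Ideal.span_singleton_le_span_singleton]
  exact dvd_pow_self p (he i)

variable [Fintype ι] [DecidableEq ι]

theorem blockTriangular_residueMatrix [IsDomain R] (hp : p ≠ 0)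
    (hker : RingHom.ker π = Ideal.span {p}) (he : ∀ i, e i ≠ 0)
    (f : Module.End R (∀ i, R ⧸ Ideal.span {p ^ e i})) :
    (residueMatrix (span_pow_le_ker hker he) f).BlockTriangular e := by
  intro i l hlt
  obtain ⟨x, hx⟩ := Ideal.Quotient.mk_surjective (f (Pi.single l 1) i)
  have hzero : p ^ e l • f (Pi.single l 1) = 0 := by
    rw [← map_smul, ← Pi.single_smul, Algebra.smul_def, mul_one, Ideal.Quotient.algebraMap_eq,
      Ideal.Quotient.mk_singleton_self, Pi.single_zero, map_zero]
  have hdvd : p ^ e i ∣ p ^ e l * x := by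
    rw [← Ideal.mem_span_singleton, ← Ideal.Quotient.eq_zero_iff_mem, map_mul, hx]
    exact congrFun hzero i
  have hpx : p ∣ x := by
    rw [← mul_dvd_mul_iff_left (pow_ne_zero (e l) hp), ← pow_succ]
    exact (pow_dvd_pow p hlt).trans hdvd
  rwa [residueMatrix_apply_of_eq_mk _ hx.symm, ← RingHom.mem_ker, hker, Ideal.mem_span_singleton]

theorem exists_residueMatrix_eq_of_blockTriangular (hπ : Function.Surjective π)
    (hker : RingHom.ker π = Ideal.span {p}) (he : ∀ i, e i ≠ 0) {M : Matrix ι ι κ}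
    (hM : M.BlockTriangular e) : ∃ f, residueMatrix (span_pow_le_ker hker he) f = M := by
  have hlift : ∀ i l, ∃ r, π r = M i l ∧ (e l < e i → r = 0) := fun i l ↦ by
    by_cases hlt : e l < e i
    · exact ⟨0, by rw [map_zero, hM hlt], fun _ ↦ rfl⟩
    · exact (hπ (M i l)).imp fun r hr ↦ ⟨hr, fun h ↦ absurd h hlt⟩
  choose r hr hr0 using hlift
  obtain ⟨f, hf⟩ := exists_end_apply_single_one_eq_mk (I := fun i ↦ Ideal.span {p ^ e i})
    (r := .of r) fun i l a ha ↦ by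
      obtain hlt | hle := lt_or_ge (e l) (e i)
      · rw [of_apply, hr0 i l hlt, mul_zero]
        exact zero_mem _
      · exact Ideal.mul_mem_right _ _
          (Ideal.span_singleton_le_span_singleton.2 (pow_dvd_pow p hle) ha)
  refine ⟨f, ext fun i l ↦ ?_⟩
  rw [residueMatrix_apply_of_eq_mk _ (hf i l), of_apply, hr]

theorem exists_surjective_ringHom_blockTriangularSubsemiring [IsDomain R] (hp : p ≠ 0)
    (hπ : Function.Surjective π) (hker : RingHom.ker π = Ideal.span {p}) (he : ∀ i, e i ≠ 0) :
    ∃ φ : Module.End R (∀ i, R ⧸ Ideal.span {p ^ e i}) →+* blockTriangularSubsemiring κ e,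
      Function.Surjective φ ∧ ∀ f ∈ RingHom.ker φ, IsNilpotent f := by
  refine ⟨(residueMatrix (span_pow_le_ker hker he)).codRestrict _
    (blockTriangular_residueMatrix hp hker he), fun ⟨M, hM⟩ ↦ ?_, fun f hf ↦ ?_⟩
  · obtain ⟨f, hf⟩ := exists_residueMatrix_eq_of_blockTriangular hπ hker he hM
    exact ⟨f, Subtype.ext hf⟩
  · refine isNilpotent_of_mem_ker_residueMatrix (span_pow_le_ker hker he) (k := ∑ i, e i)
      (fun i ↦ ?_) f (congrArg Subtype.val hf)
    rw [hker, Ideal.span_singleton_pow, Ideal.span_singleton_le_span_singleton]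
    exact pow_dvd_pow p (Finset.single_le_sum (fun _ _ ↦ Nat.zero_le _) (Finset.mem_univ i))

end PrimePower

section DiagonalBlocks

variable {R m α : Type*} [CommRing R] [Fintype m] [LinearOrder α] {b : m → α}

theorem toSquareBlock_mul_of_blockTriangular {M N : Matrix m m R} (hM : M.BlockTriangular b)
    (hN : N.BlockTriangular b) (k : α) :
    (M * N).toSquareBlock b k = M.toSquareBlock b k * N.toSquareBlock b k := by
  have hoff : M.toBlock (b · = k) (¬ b · = k) * N.toBlock (¬ b · = k) (b · = k) = 0 := by
    ext ⟨i, rfl⟩ ⟨j, hj⟩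
    refine Finset.sum_eq_zero fun ⟨l, hl⟩ _ ↦ ?_
    obtain hlt | hlt := lt_or_gt_of_ne hl
    · exact mul_eq_zero_of_left (hM hlt) _
    · exact mul_eq_zero_of_right _ (hN (hj.trans_lt hlt))
  refine (toBlock_mul_eq_add _ (b · = k) _ M N).trans ?_
  rw [hoff, add_zero]
  rfl

variable [DecidableEq m]

/-- The ring homomorphism sending a block triangular matrix to the family of its diagonal blocks. -/
def diagonalBlocks (b : m → α) :
    blockTriangularSubsemiring R b →+*
      ∀ k : Set.range b, Matrix {i // b i = k} {i // b i = k} R where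
  toFun M k := M.1.toSquareBlock b k
  map_one' := funext fun _ ↦ toBlock_one_self _
  map_mul' M N := funext fun k ↦ toSquareBlock_mul_of_blockTriangular M.2 N.2 k
  map_zero' := rfl
  map_add' _ _ := rfl

theorem diagonalBlocks_surjective : Function.Surjective (diagonalBlocks (R := R) b) := by
  intro D
  let M : Matrix m m R := .of fun i j ↦
    if h : b j = b i then D ⟨b i, i, rfl⟩ ⟨i, rfl⟩ ⟨j, h⟩ else 0
  refine ⟨⟨M, fun i j hlt ↦ dif_neg hlt.ne⟩, ?_⟩
  refine funext fun ⟨k, hk⟩ ↦ Matrix.ext fun ⟨i, hi⟩ ⟨j, hj⟩ ↦ ?_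
  obtain rfl : b i = k := hi
  exact dif_pos hj

theorem isNilpotent_of_mem_ker_diagonalBlocks :
    ∀ M ∈ RingHom.ker (diagonalBlocks (R := R) b), IsNilpotent M := by
  rintro ⟨M, hM⟩ hzero
  have hblock : ∀ k ∈ Finset.univ.image b, (M.toSquareBlock b k).charpoly =
      X ^ Fintype.card {i // b i = k} := by
    intro k hk
    obtain ⟨i, -, rfl⟩ := Finset.mem_image.1 hk
    rw [show M.toSquareBlock b (b i) = 0 from congrFun hzero ⟨b i, i, rfl⟩, charpoly_zero]
  have hchar := hM.charpoly
  rw [Finset.prod_congr rfl hblock, Finset.prod_pow_eq_pow_sum] at hchar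
  have hpow := aeval_self_charpoly M
  rw [hchar, map_pow, aeval_X] at hpow
  exact ⟨_, Subtype.ext hpow⟩

end DiagonalBlocks

theorem exists_ringEquiv_pi_matrix_fin {R α : Type*} [Semiring R] [Finite α] [Nonempty α]
    (s : α → Type*) [∀ k, Fintype (s k)] [∀ k, Nonempty (s k)] :
    ∃ (m : ℕ) (d : Fin m → ℕ), 0 < m ∧ (∀ j, 0 < d j) ∧
      Nonempty ((∀ k, Matrix (s k) (s k) R) ≃+* ∀ j, Matrix (Fin (d j)) (Fin (d j)) R) := by
  classical
  exact ⟨Nat.card α, fun j ↦ Fintype.card (s ((Finite.equivFin α).symm j)), Nat.card_pos,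
    fun _ ↦ Fintype.card_pos,
    ⟨(RingEquiv.piCongrLeft' _ (Finite.equivFin α)).trans
      (RingEquiv.piCongrRight fun _ ↦ Matrix.reindexRingEquiv R (Fintype.equivFin _))⟩⟩

theorem exists_surjective_ringHom_pi_matrix_fin {R κ ι : Type*} [CommRing R] [IsDomain R]
    [CommRing κ] [Finite ι] [Nonempty ι] {π : R →+* κ} {p : R} {e : ι → ℕ} (hp : p ≠ 0)
    (hπ : Function.Surjective π) (hker : RingHom.ker π = Ideal.span {p}) (he : ∀ i, e i ≠ 0) :
    ∃ (m : ℕ) (d : Fin m → ℕ) (φ : Module.End R (∀ i, R ⧸ Ideal.span {p ^ e i}) →+*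
        ∀ j, Matrix (Fin (d j)) (Fin (d j)) κ),
      0 < m ∧ (∀ j, 0 < d j) ∧ Function.Surjective φ ∧ ∀ f ∈ RingHom.ker φ, IsNilpotent f := by
  classical
  cases nonempty_fintype ι
  have : ∀ k : Set.range e, Nonempty {i // e i = k} := fun ⟨_, i, hi⟩ ↦ ⟨⟨i, hi⟩⟩
  obtain ⟨φ, hφ, hφnil⟩ := exists_surjective_ringHom_blockTriangularSubsemiring hp hπ hker he
  obtain ⟨m, d, hm, hd, ⟨E⟩⟩ :=
    exists_ringEquiv_pi_matrix_fin (R := κ) fun k : Set.range e ↦ {i // e i = k}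
  refine ⟨m, d, (E : _ →+* _).comp ((diagonalBlocks e).comp φ), hm, hd,
    E.surjective.comp (diagonalBlocks_surjective.comp hφ), fun f hf ↦ ?_⟩
  refine isNilpotent_of_mem_ker_comp isNilpotent_of_mem_ker_diagonalBlocks hφnil f ?_
  exact (map_eq_zero_iff E E.injective).1 hf

section PrimaryModule

theorem bijective_pi_proj_subtype {R ι : Type*} {N : ι → Type*} [Semiring R]
    [∀ i, AddCommMonoid (N i)] [∀ i, Module R (N i)] {P : ι → Prop}
    (hN : ∀ i, ¬ P i → Subsingleton (N i)) :
    Function.Bijective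
      (LinearMap.pi fun i : {i // P i} ↦ (LinearMap.proj i.1 : (∀ i, N i) →ₗ[R] N i)) := by
  classical
  refine ⟨fun y z h ↦ funext fun i ↦ ?_, fun z ↦ ?_⟩
  · by_cases hi : P i
    · exact congrFun h ⟨i, hi⟩
    · exact (hN i hi).elim _ _
  · exact ⟨fun i ↦ if hi : P i then z ⟨i, hi⟩ else 0, funext fun i ↦ dif_pos i.2⟩

variable {R M : Type*} [CommRing R] [IsDomain R] [IsPrincipalIdealRing R] [AddCommGroup M]
  [Module R M] [Module.Finite R M] {p : R}

theorem exists_linearEquiv_pi_quotient_span_pow (hp : Irreducible p)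
    (hM : IsTorsion' M (Submonoid.powers p)) :
    ∃ (ι : Type) (_ : Finite ι) (e : ι → ℕ), (∀ i, e i ≠ 0) ∧
      Nonempty (M ≃ₗ[R] ∀ i, R ⧸ Ideal.span {p ^ e i}) := by
  obtain ⟨D, k, ⟨E⟩⟩ := torsion_by_prime_power_decomposition hp hM
  have hzero : ∀ i, ¬ k i ≠ 0 → Subsingleton (R ⧸ Ideal.span {p ^ k i}) := fun i hi ↦ by
    rw [Ideal.Quotient.subsingleton_iff, Ideal.span_singleton_eq_top, not_not.1 hi, pow_zero]
    exact isUnit_one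
  exact ⟨{i // k i ≠ 0}, inferInstance, fun i ↦ k i, fun i ↦ i.2,
    ⟨E ≪≫ₗ DirectSum.linearEquivFunOnFintype R _ _ ≪≫ₗ
      LinearEquiv.ofBijective _ (bijective_pi_proj_subtype hzero)⟩⟩

theorem exists_surjective_end_ringHom_pi_matrix_fin [Nontrivial M] {κ : Type*} [CommRing κ]
    {π : R →+* κ} (hp : Irreducible p) (hM : IsTorsion' M (Submonoid.powers p))
    (hπ : Function.Surjective π) (hker : RingHom.ker π = Ideal.span {p}) :
    ∃ (m : ℕ) (d : Fin m → ℕ) (φ : Module.End R M →+* ∀ j, Matrix (Fin (d j)) (Fin (d j)) κ),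
      0 < m ∧ (∀ j, 0 < d j) ∧ Function.Surjective φ ∧ ∀ f ∈ RingHom.ker φ, IsNilpotent f := by
  obtain ⟨ι, _, e, he, ⟨E⟩⟩ := exists_linearEquiv_pi_quotient_span_pow hp hM
  have : Nonempty ι := by
    by_contra hempty
    rw [not_nonempty_iff] at hempty
    exact not_subsingleton M E.toEquiv.subsingleton
  obtain ⟨m, d, φ, hm, hd, hφ, hnil⟩ :=
    exists_surjective_ringHom_pi_matrix_fin hp.ne_zero hπ hker he
  refine ⟨m, d, φ.comp (E.conjRingEquiv : _ →+* _), hm, hd, hφ.comp E.conjRingEquiv.surjective,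
    fun f hf ↦ ?_⟩
  exact (IsNilpotent.map_iff E.conjRingEquiv.injective).1 (hnil _ hf)

end PrimaryModule

section Nilpotent

variable {F V : Type*} [Field F] [AddCommGroup V] [Module F V] {T : Module.End F V}

theorem isTorsion'_powers_X_aeval' (hT : IsNilpotent T) :
    IsTorsion' (AEval' T) (Submonoid.powers (X : F[X])) := by
  obtain ⟨k, hk⟩ := hT
  intro v
  obtain ⟨w, rfl⟩ := (AEval'.of T).surjective v
  exact ⟨⟨X ^ k, k, rfl⟩, (AEval'.X_pow_smul_of T w k).trans (by rw [hk, zero_smul, map_zero])⟩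

theorem exists_surjective_end_aeval'_ringHom_pi_matrix_fin [FiniteDimensional F V] [Nontrivial V]
    (hT : IsNilpotent T) :
    ∃ (m : ℕ) (d : Fin m → ℕ)
      (φ : Module.End F[X] (AEval' T) →+* ∀ j, Matrix (Fin (d j)) (Fin (d j)) F),
      0 < m ∧ (∀ j, 0 < d j) ∧ Function.Surjective φ ∧ ∀ f ∈ RingHom.ker φ, IsNilpotent f := by
  have : Nontrivial (AEval' T) := (AEval'.of T).symm.toEquiv.nontrivial
  exact exists_surjective_end_ringHom_pi_matrix_fin irreducible_X (isTorsion'_powers_X_aeval' hT)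
    (π := constantCoeff) constantCoeff_surjective ker_constantCoeff

end Nilpotent

/-- The centraliser of a matrix `A` as the endomorphism ring of the `R[X]`-module `n → R` on which
`X` acts as `A`. -/
noncomputable def matrixCentralizerEquivEndAEval {R n : Type*} [CommRing R] [Fintype n]
    [DecidableEq n] (A : Matrix n n R) :
    Subalgebra.centralizer R {A} ≃+* Module.End R[X] (AEval' (toLin' A)) :=
  ((toLinAlgEquiv'.subalgebraMap _).trans (Subalgebra.equivOfEq _ _
    (map_centralizer_singleton toLinAlgEquiv' A))).toRingEquiv.trans
    (centralizerEquivEndAEval (toLin' A))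

/-- Let `F` be a field, `n` a positive integer, and `A ∈ Mat_n(F)`, with centraliser
`C_F(A) = { X : X * A = A * X }` (a finite-dimensional `F`-algebra).  Then:
(a) the minimal polynomial of `A` is squarefree iff `C_F(A)` is a semisimple ring;
(b) the characteristic polynomial of `A` is squarefree iff `C_F(A)` is isomorphic
to a finite product of fields;
(c) if `A` is nilpotent, then `C_F(A)/J(C_F(A))` is isomorphic to
`∏_{j=1}^m Mat_{d_j}(F)` for some positive integers `m, d_1, …, d_m`; here the
quotient by the Jacobson radical `J` is expressed by a surjective ring homomorphism
whose kernel is the Jacobson radical. -/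
theorem stmt_19 {F : Type u} [Field F] {n : ℕ} (hn : 0 < n)
    (A : Matrix (Fin n) (Fin n) F) :
    (Squarefree (minpoly F A) ↔ IsSemisimpleRing ↥(Subalgebra.centralizer F {A})) ∧
    (Squarefree (Matrix.charpoly A) ↔
      ∃ (m : ℕ) (Fi : Fin m → Type u) (_ : ∀ i, Field (Fi i)),
        Nonempty (↥(Subalgebra.centralizer F {A}) ≃+* ∀ i, Fi i)) ∧
    (IsNilpotent A →
      ∃ (m : ℕ) (d : Fin m → ℕ)
        (φ : ↥(Subalgebra.centralizer F {A}) →+*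
          ∀ j, Matrix (Fin (d j)) (Fin (d j)) F),
        0 < m ∧ (∀ j, 0 < d j) ∧ Function.Surjective φ ∧
          RingHom.ker φ = Ideal.jacobson (⊥ : Ideal ↥(Subalgebra.centralizer F {A}))) := by
  let E := matrixCentralizerEquivEndAEval A
  have : NeZero n := ⟨hn.ne'⟩
  refine ⟨?_, ?_, fun hA ↦ ?_⟩
  · rw [← Matrix.minpoly_toLin', squarefree_minpoly_iff_isSemisimpleRing_end]
    exact E.symm.isSemisimpleRing_iff
  · rw [exists_ringEquiv_pi_field_iff, ← Matrix.charpoly_toLin',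
      squarefree_charpoly_iff_isSemisimpleRing_end_and_commute]
    exact and_congr E.symm.isSemisimpleRing_iff <|
      E.symm.toEquiv.forall₂_congr E.symm.toEquiv (commute_map_iff E.symm.injective).symm
  · have hT : IsNilpotent (Matrix.toLin' A) := hA.map Matrix.toLinAlgEquiv'
    obtain ⟨m, d, φ, hm, hd, hφ, hnil⟩ := exists_surjective_end_aeval'_ringHom_pi_matrix_fin hT
    refine ⟨m, d, φ.comp (E : _ →+* _), hm, hd, hφ.comp E.surjective, ?_⟩
    exact ker_eq_jacobson_bot (hφ.comp E.surjective) fun x hx ↦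
      (IsNilpotent.map_iff E.injective).1 (hnil _ hx)
end
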